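/- arXiv:1806.10026 — 3 statements merged into one kernel-verified Lean document; each statement's English description precedes it below -/
import Mathlib

section
/- Let F be a finite field of odd characteristic with q elements, and let A ⊆ F be a subset with q ≥ 2^{14·|A|}. Then for every subset E ⊆ A there exists y ∈ F such that E = {a ∈ A : there exists z ∈ F with z² = y + a}; that is, E is exactly the set of elements a of A for which y + a is a square in F. -/
open Polynomial

/-- the power of `f` dividing the Hasse derivative of a power of `f` -/
theorem stp_dvd_hasse {F : Type*} [Field F] (f : F[X]) (c : ℕ) :
    ∀ i ≤ c, f ^ (c - i) ∣ hasseDeriv i (f ^ c) := by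
  induction c with
  | zero => intro i hi; simp
  | succ c ih =>
    intro i hi
    rw [pow_succ', hasseDeriv_mul]
    refine Finset.dvd_sum ?_
    rintro ⟨a, b⟩ hab
    rw [Finset.HasAntidiagonal.mem_antidiagonal] at hab
    dsimp only at hab ⊢
    rcases Nat.eq_zero_or_pos a with ha | ha
    · subst ha
      rw [hasseDeriv_zero']
      have : b = i := by omega
      subst this
      rcases Nat.lt_or_ge c b with h | h
      · have : c + 1 - b = 0 := by omega
        rw [this]; simp
      · have : c + 1 - b = (c - b) + 1 := by omega
        rw [this, pow_succ']
        exact mul_dvd_mul_left _ (ih b h)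
    · exact Dvd.dvd.mul_left ((pow_dvd_pow f (by omega)).trans (ih b (by omega))) _

theorem stp_exists_G {F : Type*} [Field F] (f : F[X]) (hf : f ≠ 0) (c i : ℕ) (hi : i ≤ c) :
    ∃ G : F[X], hasseDeriv i (f ^ c) = f ^ (c - i) * G ∧ G.natDegree ≤ i * f.natDegree := by
  obtain ⟨G, hG⟩ := stp_dvd_hasse f c i hi
  refine ⟨G, hG, ?_⟩
  rcases eq_or_ne G 0 with h | h
  · simp [h]
  have h1 := natDegree_hasseDeriv_le (f ^ c) i
  rw [hG, natDegree_mul (pow_ne_zero _ hf) h, natDegree_pow, natDegree_pow] at h1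
  have : c * f.natDegree = (c - i) * f.natDegree + i * f.natDegree := by
    rw [← add_mul]; congr 1; omega
  omega

theorem stp_order {F : Type*} [Field F] (P : F[X]) (x : F) (l : ℕ)
    (h : ∀ k < l, (hasseDeriv k P).eval x = 0) : (X - C x) ^ l ∣ P := by
  have h1 : X ^ l ∣ taylor x P := by
    rw [X_pow_dvd_iff]
    intro d hd
    rw [taylor_coeff]; exact h d hd
  obtain ⟨Q, hQ⟩ := h1
  refine ⟨taylor (-x) Q, ?_⟩
  apply taylor_injective x
  rw [hQ, taylor_mul, taylor_taylor, taylor_pow]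
  simp

theorem stp_reduce {F : Type*} [Field F] [Fintype F] {J : ℕ} (u : Fin J → F[X]) (x : F) :
    (X - C x) ^ (Fintype.card F) ∣
      (∑ j : Fin J, u j * X ^ ((j : ℕ) * Fintype.card F)) - ∑ j : Fin J, C (x ^ (j : ℕ)) * u j := by
  rw [← Finset.sum_sub_distrib]
  refine Finset.dvd_sum fun j _ => ?_
  have h : (X - C x) ^ (Fintype.card F) = X ^ (Fintype.card F) - C x := by
    rw [← FiniteField.expand_card]; simp
  rw [h, mul_comm (C _), ← mul_sub, mul_comm (j : ℕ), pow_mul, C_pow]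
  exact Dvd.dvd.mul_left (sub_dvd_pow_sub_pow _ _ _) _

theorem stp_nonvan0 {F : Type*} [Field F] [Fintype F] (f : F[X]) (e : F)
    (hf0 : f.eval 0 ≠ 0) (he : f.rootMultiplicity e = 1) (c D : ℕ)
    (hc : 2 * c + 1 = Fintype.card F) (hD : 2 * D + f.natDegree ≤ Fintype.card F)
    (r s : F[X]) (hr : r.degree < D) (hs : s.degree < D)
    (h : X ^ Fintype.card F ∣ r + s * f ^ c) : r = 0 ∧ s = 0 := by
  have hf : f ≠ 0 := by rintro rfl; simp at hf0
  set q := Fintype.card F with hq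
  have h1 : X ^ q ∣ f ^ q - C (f.eval 0) := by
    have : X ∣ f - C (f.eval 0) := by
      rw [X_dvd_iff]; simp [coeff_zero_eq_eval_zero]
    obtain ⟨w, hw⟩ := this
    have hw' : f = C (f.eval 0) + X * w := by rw [← hw]; ring
    refine ⟨expand F q w, ?_⟩
    rw [hq, ← FiniteField.expand_card, ← hq]
    conv_lhs => rw [hw']
    simp
  have h2 : X ^ q ∣ r ^ 2 * f - C (f.eval 0) * s ^ 2 := by
    have e1 : r ^ 2 * f - C (f.eval 0) * s ^ 2 =
        (r + s * f ^ c) * ((r - s * f ^ c) * f) + (f ^ q - C (f.eval 0)) * s ^ 2 := by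
      rw [← hc]; ring
    rw [e1]
    exact dvd_add (Dvd.dvd.mul_right h _) (Dvd.dvd.mul_right h1 _)
  have hDpos : r ≠ 0 ∨ s ≠ 0 → 0 < D := by
    rintro (h | h)
    · by_contra h0
      have : D = 0 := by omega
      subst this
      simp at hr; exact h hr
    · by_contra h0
      have : D = 0 := by omega
      subst this
      simp at hs; exact h hs
  have hrn : r = 0 ∨ r.natDegree < D := by
    rcases eq_or_ne r 0 with h | h
    · exact Or.inl h
    · exact Or.inr ((natDegree_lt_iff_degree_lt h).2 hr)
  have hsn : s = 0 ∨ s.natDegree < D := by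
    rcases eq_or_ne s 0 with h | h
    · exact Or.inl h
    · exact Or.inr ((natDegree_lt_iff_degree_lt h).2 hs)
  by_contra hne
  have hne' : r ≠ 0 ∨ s ≠ 0 := by tauto
  have hD0 := hDpos hne'
  have hrn' : r.natDegree ≤ D - 1 := by
    rcases hrn with h | h
    · simp [h]
    · omega
  have hsn' : s.natDegree ≤ D - 1 := by
    rcases hsn with h | h
    · simp [h]
    · omega
  have h3 : r ^ 2 * f - C (f.eval 0) * s ^ 2 = 0 := by
    apply eq_zero_of_dvd_of_natDegree_lt h2
    rw [natDegree_X_pow]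
    refine lt_of_le_of_lt (natDegree_sub_le_of_le (m := 2 * (D - 1) + f.natDegree)
      (n := 2 * (D - 1)) ?_ ?_) ?_
    · exact natDegree_mul_le_of_le (natDegree_pow_le_of_le 2 hrn') le_rfl
    · exact (natDegree_C_mul_le _ _).trans (natDegree_pow_le_of_le 2 hsn')
    · apply max_lt <;> omega
  have h4 : r ^ 2 * f = C (f.eval 0) * s ^ 2 := sub_eq_zero.1 h3
  have hr0 : r ≠ 0 := by
    rintro rfl
    have : s ≠ 0 := by simpa using hne'
    have h5 : C (f.eval 0) * s ^ 2 = 0 := by rw [← h4]; simp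
    simp [this, hf0] at h5
  have hs0 : s ≠ 0 := by
    rintro rfl
    simp [hr0, hf] at h4
  have h6 := congrArg (rootMultiplicity e) h4
  rw [rootMultiplicity_mul (mul_ne_zero (pow_ne_zero _ hr0) hf),
    rootMultiplicity_mul (mul_ne_zero (by simpa using hf0) (pow_ne_zero _ hs0)),
    pow_two, pow_two, rootMultiplicity_mul (mul_ne_zero hr0 hr0),
    rootMultiplicity_mul (mul_ne_zero hs0 hs0), he, rootMultiplicity_C] at h6
  omega

theorem stp_nonvan {F : Type*} [Field F] [Fintype F] (f : F[X]) (e : F)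
    (hf0 : f.eval 0 ≠ 0) (he : f.rootMultiplicity e = 1) (c D : ℕ)
    (hc : 2 * c + 1 = Fintype.card F) (hD : 2 * D + f.natDegree ≤ Fintype.card F) (J : ℕ) :
    ∀ (r s : Fin J → F[X]) (_ : ∀ j, (r j).degree < D) (_ : ∀ j, (s j).degree < D)
    (_ : ∑ j, (r j + s j * f ^ c) * X ^ ((j : ℕ) * Fintype.card F) = 0),
    ∀ j, r j = 0 ∧ s j = 0 := by
  induction J with
  | zero => intro r s _ _ _ j; exact j.elim0
  | succ J ih =>
    intro r s hr hs h
    rw [Fin.sum_univ_succ] at h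
    have h1 : ∑ i : Fin J, (r i.succ + s i.succ * f ^ c) * X ^ ((i.succ : ℕ) * Fintype.card F)
        = X ^ Fintype.card F *
          ∑ i : Fin J, (r i.succ + s i.succ * f ^ c) * X ^ ((i : ℕ) * Fintype.card F) := by
      rw [Finset.mul_sum]
      refine Finset.sum_congr rfl fun i _ => ?_
      rw [Fin.val_succ]; ring
    rw [h1] at h
    have h0 : r 0 = 0 ∧ s 0 = 0 := by
      apply stp_nonvan0 f e hf0 he c D hc hD _ _ (hr 0) (hs 0)
      have h2 := eq_neg_of_add_eq_zero_left h
      simp only [Fin.val_zero, zero_mul, pow_zero, mul_one] at h2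
      rw [h2]
      exact (dvd_mul_right _ _).neg_right
    have h3 := ih (fun i => r i.succ) (fun i => s i.succ) (fun i => hr _) (fun i => hs _) (by
      rw [h0.1, h0.2] at h
      simpa using h)
    intro j
    refine Fin.cases h0 (fun i => h3 i) j

/-- The auxiliary polynomials whose vanishing forces high order vanishing. -/
noncomputable def stpM {F : Type*} [Field F] (f : F[X]) (G : ℕ → F[X]) (a : F) {J : ℕ} (k : ℕ)
    (r s : Fin J → F[X]) : F[X] :=
  ∑ j : Fin J, X ^ (j : ℕ) * (f ^ k * hasseDeriv k (r j) +
    C a * ∑ ij ∈ Finset.HasAntidiagonal.antidiagonal k, f ^ ij.1 * hasseDeriv ij.1 (s j) * G ij.2)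

theorem stpM_eval {F : Type*} [Field F] [Fintype F] (f : F[X]) (G : ℕ → F[X]) (a : F) {J : ℕ}
    (k c : ℕ) (r s : Fin J → F[X]) (hk : k ≤ c)
    (hG : ∀ i ≤ c, hasseDeriv i (f ^ c) = f ^ (c - i) * G i) (x : F)
    (hx : f.eval x ^ c = a) :
    (stpM f G a k r s).eval x = f.eval x ^ k *
      (hasseDeriv k (∑ j : Fin J, C (x ^ (j : ℕ)) * (r j + s j * f ^ c))).eval x := by
  have key : ∀ j, (∑ ij ∈ Finset.HasAntidiagonal.antidiagonal k, f ^ ij.1 * hasseDeriv ij.1 (s j) * G ij.2) * f ^ c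
      = f ^ k * hasseDeriv k (s j * f ^ c) := by
    intro j
    rw [hasseDeriv_mul, Finset.sum_mul, Finset.mul_sum]
    refine Finset.sum_congr rfl ?_
    rintro ⟨i, i'⟩ h
    rw [Finset.HasAntidiagonal.mem_antidiagonal] at h
    dsimp only at h ⊢
    rw [hG i' (by omega)]
    have e1 : f ^ c = f ^ (c - i') * f ^ i' := by rw [← pow_add]; congr 1; omega
    have e2 : f ^ k = f ^ i * f ^ i' := by rw [← pow_add, h]
    rw [e1, e2]; ring
  unfold stpM
  rw [map_sum, eval_finsetSum, eval_finsetSum, Finset.mul_sum]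
  refine Finset.sum_congr rfl fun j _ => ?_
  rw [← smul_eq_C_mul (x ^ (j : ℕ)), map_smul, map_add]
  have := congrArg (eval x) (key j)
  simp only [eval_mul, eval_pow, hx] at this
  simp only [eval_mul, eval_pow, eval_X, eval_add, eval_C, eval_smul, smul_eq_mul, mul_add]
  rw [mul_comm a, this]
  ring

theorem stpM_natDegree {F : Type*} [Field F] (f : F[X]) (G : ℕ → F[X]) (a : F) {J : ℕ}
    (k c D : ℕ) (r s : Fin J → F[X]) (hk : k ≤ c)
    (hG : ∀ i ≤ c, (G i).natDegree ≤ i * f.natDegree)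
    (hr : ∀ j, (r j).natDegree ≤ D) (hs : ∀ j, (s j).natDegree ≤ D) :
    (stpM f G a k r s).natDegree ≤ J + (k * f.natDegree + D) := by
  unfold stpM
  refine natDegree_sum_le_of_forall_le _ _ fun j _ => ?_
  refine natDegree_mul_le_of_le (by rw [natDegree_X_pow]; exact j.2.le) ?_
  refine natDegree_add_le_of_degree_le ?_ ?_
  · refine natDegree_mul_le_of_le natDegree_pow_le ?_
    exact (natDegree_hasseDeriv_le _ _).trans ((Nat.sub_le _ _).trans (hr j))
  · refine (natDegree_C_mul_le _ _).trans ?_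
    refine natDegree_sum_le_of_forall_le _ _ ?_
    rintro ⟨i, i'⟩ h
    rw [Finset.HasAntidiagonal.mem_antidiagonal] at h
    dsimp only at h ⊢
    have := natDegree_mul_le_of_le (natDegree_mul_le_of_le (natDegree_pow_le (p := f) (n := i))
      ((natDegree_hasseDeriv_le (s j) i).trans ((Nat.sub_le _ _).trans (hs j)))) (hG i' (by omega))
    refine this.trans ?_
    rw [← h, add_mul]; omega

theorem stp_linalg {F : Type*} [Field F] (f : F[X]) (G : ℕ → F[X]) (a : F) (J D l c : ℕ)
    (hlc : l ≤ c)
    (hG : ∀ i ≤ c, (G i).natDegree ≤ i * f.natDegree)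
    (hcount : l * (J + l * f.natDegree + D) < 2 * J * D) :
    ∃ r s : Fin J → F[X], (∀ j, (r j).degree < D) ∧ (∀ j, (s j).degree < D) ∧
      (∃ j, r j ≠ 0 ∨ s j ≠ 0) ∧ ∀ k < l, stpM f G a k r s = 0 := by
  let K := J + l * f.natDegree + D
  let Φ : ((Fin J → degreeLT F D) × (Fin J → degreeLT F D)) →ₗ[F] (Fin l → Fin K → F) :=
    { toFun := fun v k i => (stpM f G a k (fun j => (v.1 j : F[X])) (fun j => (v.2 j : F[X]))).coeff i
      map_add' := by
        intro v w
        funext k i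
        simp only [Pi.add_apply]
        rw [← coeff_add]
        congr 1
        simp only [stpM, Prod.fst_add, Prod.snd_add, Pi.add_apply, Submodule.coe_add, map_add,
          mul_add, add_mul, Finset.sum_add_distrib]
        ring
      map_smul' := by
        intro t v
        funext k i
        simp only [Pi.smul_apply, RingHom.id_apply]
        rw [← coeff_smul]
        congr 1
        simp only [stpM, Prod.smul_fst, Prod.smul_snd, Pi.smul_apply, Submodule.coe_smul, map_smul,
          mul_smul_comm, smul_mul_assoc, ← Finset.smul_sum, ← smul_add] }
  have hker : LinearMap.ker Φ ≠ ⊥ := by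
    apply LinearMap.ker_ne_bot_of_finrank_lt
    have hd : Module.finrank F (degreeLT F D) = D := by
      rw [(degreeLTEquiv F D).finrank_eq]; simp
    rw [Module.finrank_prod]
    simp only [Module.finrank_pi_fintype, hd, Module.finrank_self, mul_one, Finset.sum_const, Finset.card_univ, Fintype.card_fin, smul_eq_mul]
    calc l * K < 2 * J * D := hcount
      _ = J * D + J * D := by ring
  obtain ⟨v, hv, hv0⟩ := Submodule.exists_mem_ne_zero_of_ne_bot hker
  have hd1 : ∀ j, ((v.1 j : F[X])).degree < D := fun j => mem_degreeLT.1 (v.1 j).2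
  have hd2 : ∀ j, ((v.2 j : F[X])).degree < D := fun j => mem_degreeLT.1 (v.2 j).2
  refine ⟨fun j => v.1 j, fun j => v.2 j, hd1, hd2, ?_, ?_⟩
  · by_contra hcon
    push Not at hcon
    apply hv0
    ext j
    · simp [(hcon j).1]
    · simp [(hcon j).2]
  · intro k hk
    have hD : 0 < D := by
      rcases Nat.eq_zero_or_pos D with h | h
      · subst h; simp at hcount
      · exact h
    have nd : ∀ p : F[X], p.degree < D → p.natDegree ≤ D - 1 := by
      intro p hp
      rcases eq_or_ne p 0 with h | h
      · simp [h]
      · have := (natDegree_lt_iff_degree_lt h).2 hp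
        omega
    have hnd := stpM_natDegree f G a k c (D - 1) (fun j => (v.1 j : F[X])) (fun j => (v.2 j : F[X]))
      (by omega) hG (fun j => nd _ (hd1 j)) (fun j => nd _ (hd2 j))
    have hkl : k * f.natDegree ≤ l * f.natDegree := Nat.mul_le_mul_right _ hk.le
    ext i
    rw [coeff_zero]
    rcases Nat.lt_or_ge i K with hi | hi
    · exact congrFun (congrFun (LinearMap.mem_ker.1 hv) ⟨k, hk⟩) ⟨i, hi⟩
    · apply coeff_eq_zero_of_natDegree_lt
      have : K = J + l * f.natDegree + D := rfl
      omega

theorem stp_count {F : Type*} [Field F] [Fintype F] [DecidableEq F] (f : F[X]) (e a : F)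
    (hf0 : f.eval 0 ≠ 0) (he : f.rootMultiplicity e = 1) (c D J l : ℕ)
    (hc : 2 * c + 1 = Fintype.card F) (hD : 2 * D + f.natDegree ≤ Fintype.card F)
    (hlc : l ≤ c) (hcount : l * ((J + 1) + l * f.natDegree + D) < 2 * (J + 1) * D) :
    l * (Finset.univ.filter fun x : F => f.eval x ≠ 0 ∧ f.eval x ^ c = a).card ≤
      D + c * f.natDegree + J * Fintype.card F := by
  have hf : f ≠ 0 := by rintro rfl; simp at hf0
  have hGex : ∀ i, ∃ G : F[X], i ≤ c →
      (hasseDeriv i (f ^ c) = f ^ (c - i) * G ∧ G.natDegree ≤ i * f.natDegree) := by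
    intro i
    by_cases h : i ≤ c
    · obtain ⟨G, h⟩ := stp_exists_G f hf c i h
      exact ⟨G, fun _ => h⟩
    · exact ⟨0, fun h' => absurd h' h⟩
  choose G hG using hGex
  obtain ⟨r, s, hr, hs, ⟨j0, hj0⟩, hM⟩ := stp_linalg f G a (J + 1) D l c hlc
    (fun i hi => (hG i hi).2) hcount
  set P : F[X] := ∑ j, (r j + s j * f ^ c) * X ^ ((j : ℕ) * Fintype.card F) with hP
  have hP0 : P ≠ 0 := by
    intro h
    have := stp_nonvan f e hf0 he c D hc hD (J + 1) r s hr hs h j0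
    tauto
  set S := Finset.univ.filter fun x : F => f.eval x ≠ 0 ∧ f.eval x ^ c = a
  have hdvd : ∀ x ∈ S, (X - C x) ^ l ∣ P := by
    intro x hx
    have hx' := (Finset.mem_filter.1 hx).2
    have h1 := stp_reduce (fun j => r j + s j * f ^ c) x
    have h2 : (X - C x) ^ l ∣ ∑ j : Fin (J + 1), C (x ^ (j : ℕ)) * (r j + s j * f ^ c) := by
      apply stp_order
      intro k hk
      have h3 := stpM_eval f G a k c r s (by omega) (fun i hi => (hG i hi).1) x hx'.2
      rw [hM k hk, eval_zero] at h3
      exact (mul_eq_zero.1 h3.symm).resolve_left (pow_ne_zero _ hx'.1)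
    have h4 := (pow_dvd_pow (X - C x) (show l ≤ Fintype.card F by omega)).trans h1
    exact (dvd_sub_left h2).1 h4
  have hprod : ∏ x ∈ S, (X - C x) ^ l ∣ P := by
    apply Finset.prod_dvd_of_coprime _ hdvd
    intro x _ y _ hxy
    exact (isCoprime_X_sub_C_of_isUnit_sub (sub_ne_zero.2 hxy).isUnit).pow
  have hdeg := natDegree_le_of_dvd hprod hP0
  rw [natDegree_prod_of_monic _ _ (fun x _ => (monic_X_sub_C x).pow l)] at hdeg
  simp only [natDegree_pow, natDegree_X_sub_C, Finset.sum_const, smul_eq_mul, mul_one] at hdeg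
  rw [mul_comm]
  refine hdeg.trans ?_
  refine natDegree_sum_le_of_forall_le _ _ fun j _ => ?_
  have hj : (j : ℕ) * Fintype.card F ≤ J * Fintype.card F := Nat.mul_le_mul_right _ (by omega)
  refine natDegree_mul_le_of_le (natDegree_add_le_of_degree_le ?_ ?_) (by rw [natDegree_X_pow]; exact hj)
  · exact (natDegree_le_of_degree_le (hr j).le).trans (by omega)
  · exact natDegree_mul_le_of_le (natDegree_le_of_degree_le (hs j).le) natDegree_pow_le

set_option maxHeartbeats 1000000 in
theorem stp_charsum {F : Type*} [Field F] [Fintype F] [DecidableEq F] (hodd : ringChar F ≠ 2)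
    (n : ℕ) (hn : 1 ≤ n) (hq : 2 ^ (14 * n) ≤ Fintype.card F) (B : Finset F) (hB : B.Nonempty)
    (hBn : B.card ≤ n) (hB0 : ∀ a ∈ B, a ≠ 0) :
    |∑ y : F, ∏ a ∈ B, quadraticChar F (y + a)| * 2 ^ (n + 1) ≤ (Fintype.card F : ℤ) := by
  obtain ⟨a0, ha0⟩ := hB
  set f : F[X] := ∏ a ∈ B, (X + C a) with hf
  have hmonic : f.Monic := monic_prod_of_monic _ _ fun a _ => monic_X_add_C a
  have hdeg : f.natDegree = B.card := by
    rw [hf, natDegree_prod_of_monic _ _ fun a _ => monic_X_add_C a]; simp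
  have heval : ∀ y, f.eval y = ∏ a ∈ B, (y + a) := by
    intro y; rw [hf, eval_prod]; simp
  have hf0 : f.eval 0 ≠ 0 := by
    rw [heval, Finset.prod_ne_zero_iff]
    intro a ha; simpa using hB0 a ha
  have he : f.rootMultiplicity (-a0) = 1 := by
    have h1 : f = (X - C (-a0)) * ∏ a ∈ B.erase a0, (X + C a) := by
      rw [hf, ← Finset.mul_prod_erase _ _ ha0]; simp
    have h2 : (∏ a ∈ B.erase a0, (X + C a)).eval (-a0) ≠ 0 := by
      rw [eval_prod, Finset.prod_ne_zero_iff]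
      intro a ha
      simp only [eval_add, eval_X, eval_C]
      intro h
      exact Finset.ne_of_mem_erase ha (neg_add_eq_zero.1 h).symm
    have h3 : f ≠ 0 := hmonic.ne_zero
    rw [h1] at h3 ⊢
    rw [rootMultiplicity_mul h3, rootMultiplicity_X_sub_C_self, rootMultiplicity_eq_zero h2]
  set q := Fintype.card F with hqdef
  obtain ⟨c, hc⟩ : ∃ c, 2 * c + 1 = q := ⟨q / 2, by
    have := FiniteField.odd_card_of_char_ne_two hodd
    omega⟩
  have hc2 : q / 2 = c := by omega
  -- parameters
  set t := 2 ^ n with ht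
  have ht2 : 2 ≤ t := by
    calc 2 = 2 ^ 1 := rfl
      _ ≤ 2 ^ n := Nat.pow_le_pow_right (by norm_num) hn
  have hnt : n + 1 ≤ t := Nat.lt_two_pow_self
  have hq' : t ^ 14 ≤ q := by rw [ht, ← pow_mul, mul_comm]; exact hq
  have hm : B.card + 1 ≤ t := by omega
  have p2 : 4 ≤ t ^ 2 := by nlinarith
  have p4 : 16 ≤ t ^ 4 := by nlinarith
  have p12 : 1 ≤ t ^ 12 := Nat.one_le_pow _ _ (by omega)
  have q14 : 4 * t ^ 12 ≤ t ^ 14 := by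
    calc 4 * t ^ 12 ≤ t ^ 2 * t ^ 12 := Nat.mul_le_mul_right _ p2
      _ = t ^ 14 := by ring
  have t12 : t ≤ t ^ 12 := Nat.le_self_pow (by norm_num) t
  have t412 : 16 * t ^ 4 ≤ t ^ 12 := by
    calc 16 * t ^ 4 ≤ t ^ 4 * t ^ 4 := Nat.mul_le_mul_right _ p4
      _ = t ^ 8 := by ring
      _ ≤ t ^ 12 := Nat.pow_le_pow_right (by omega) (by norm_num)
  have hD : 2 * t ^ 12 + f.natDegree ≤ q := by rw [hdeg]; omega
  have hlc : 2 * t ^ 4 ≤ c := by omega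
  have hcount : 2 * t ^ 4 * ((t ^ 4 + 1) + 2 * t ^ 4 * f.natDegree + t ^ 12)
      < 2 * (t ^ 4 + 1) * t ^ 12 := by
    have h1 : t ^ 4 * ((t ^ 4 + 1) + 2 * t ^ 4 * B.card) < t ^ 12 := by
      have h2 : (t ^ 4 + 1) + 2 * t ^ 4 * B.card ≤ 2 * t ^ 4 * t := by
        nlinarith
      have h3 : 2 * t ^ 4 * t < t ^ 8 := by
        calc 2 * t ^ 4 * t ≤ t * t ^ 4 * t := by gcongr
          _ = t ^ 6 := by ring
          _ < t ^ 8 := Nat.pow_lt_pow_right (by omega) (by norm_num)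
      calc _ < t ^ 4 * t ^ 8 := by
            apply Nat.mul_lt_mul_of_pos_left (lt_of_le_of_lt h2 h3) (by omega)
        _ = t ^ 12 := by ring
    rw [hdeg]
    nlinarith
  have hN : ∀ a : F, _ := fun a => stp_count f (-a0) a hf0 he c (t ^ 12) (t ^ 4) (2 * t ^ 4)
    hc hD hlc hcount
  have h11 : (1 : F) ≠ -1 := fun h => Ring.neg_one_ne_one_of_char_ne_two hodd h.symm
  have hχ : ∀ u : F, u ≠ 0 → (quadraticChar F u = 1 ∧ u ^ c = 1) ∨
      (quadraticChar F u = -1 ∧ u ^ c = -1) := by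
    intro u hu
    have h1 := quadraticChar_eq_pow_of_char_ne_two' hodd u
    rw [← hqdef, hc2] at h1
    rcases quadraticChar_dichotomy hu with h | h
    · left; refine ⟨h, ?_⟩; rw [← h1, h]; simp
    · right; refine ⟨h, ?_⟩; rw [← h1, h]; simp
  set N1 := (Finset.univ.filter fun x : F => f.eval x ≠ 0 ∧ f.eval x ^ c = 1).card with hN1
  set N2 := (Finset.univ.filter fun x : F => f.eval x ≠ 0 ∧ f.eval x ^ c = -1).card with hN2
  set Z := (Finset.univ.filter fun x : F => f.eval x = 0).card with hZ
  have hsum : ∑ y : F, ∏ a ∈ B, quadraticChar F (y + a) = (N1 : ℤ) - N2 := by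
    rw [hN1, hN2, Finset.card_filter, Finset.card_filter]
    push_cast
    rw [← Finset.sum_sub_distrib]
    refine Finset.sum_congr rfl fun y _ => ?_
    rw [← map_prod, ← heval]
    by_cases hy : f.eval y = 0
    · simp [hy]
    · rcases hχ _ hy with ⟨h1, h2⟩ | ⟨h1, h2⟩
      · simp [h1, h2, hy, h11]
      · simp [h1, h2, hy, h11.symm]
  have hcard : (q : ℤ) = N1 + N2 + Z := by
    have : (q : ℤ) = ∑ y : F, 1 := by simp [hqdef]
    rw [this, hN1, hN2, hZ, Finset.card_filter, Finset.card_filter, Finset.card_filter]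
    push_cast
    rw [← Finset.sum_add_distrib, ← Finset.sum_add_distrib]
    refine Finset.sum_congr rfl fun y _ => ?_
    by_cases hy : f.eval y = 0
    · simp [hy]
    · rcases hχ _ hy with ⟨h1, h2⟩ | ⟨h1, h2⟩
      · simp [h2, hy, h11]
      · simp [h2, hy, h11.symm]
  have hZm : Z ≤ B.card := by
    rw [← hdeg]
    refine le_trans (Finset.card_le_card (t := f.roots.toFinset) ?_)
      ((Multiset.toFinset_card_le _).trans (card_roots' f))
    intro y hy
    rw [Multiset.mem_toFinset, mem_roots hmonic.ne_zero]
    exact (Finset.mem_filter.1 hy).2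
  have b1 := hN 1
  have b2 := hN (-1)
  rw [← hN1, hdeg] at b1
  rw [← hN2, hdeg] at b2
  rw [hsum]
  set m := B.card
  -- final bound in integers
  have fin : (t ^ 12 + c * m + t ^ 4 * m) * (2 * t) ≤ t ^ 4 * q := by
    have f1 : t ^ 12 * (2 * t) ≤ q := by
      calc t ^ 12 * (2 * t) ≤ t ^ 12 * (t * t) := by gcongr
        _ = t ^ 14 := by ring
        _ ≤ q := hq'
    have f2 : c * m * (2 * t) ≤ q * t ^ 2 := by
      calc c * m * (2 * t) = (2 * c) * (m * t) := by ring
        _ ≤ q * (t * t) := by gcongr <;> omega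
        _ = q * t ^ 2 := by ring
    have f3 : t ^ 4 * m * (2 * t) ≤ q := by
      calc t ^ 4 * m * (2 * t) ≤ t ^ 4 * t * (t * t) := by gcongr; omega
        _ = t ^ 7 := by ring
        _ ≤ t ^ 14 := Nat.pow_le_pow_right (by omega) (by norm_num)
        _ ≤ q := hq'
    have f4 : t ^ 2 + 2 ≤ t ^ 4 := by nlinarith
    calc (t ^ 12 + c * m + t ^ 4 * m) * (2 * t)
        = t ^ 12 * (2 * t) + c * m * (2 * t) + t ^ 4 * m * (2 * t) := by ring
      _ ≤ q + q * t ^ 2 + q := by gcongr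
      _ = (t ^ 2 + 2) * q := by ring
      _ ≤ t ^ 4 * q := Nat.mul_le_mul_right _ f4
  have hLS : (t : ℤ) ^ 4 * |(N1 : ℤ) - N2| ≤ t ^ 12 + c * m + t ^ 4 * m := by
    have b1' : 2 * (t : ℤ) ^ 4 * N1 ≤ t ^ 12 + c * m + t ^ 4 * q := by exact_mod_cast b1
    have b2' : 2 * (t : ℤ) ^ 4 * N2 ≤ t ^ 12 + c * m + t ^ 4 * q := by exact_mod_cast b2
    have hz : (t : ℤ) ^ 4 * Z ≤ t ^ 4 * m := by
      exact_mod_cast Nat.mul_le_mul_left _ hZm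
    rw [hcard] at b1' b2'
    rcases abs_cases ((N1 : ℤ) - N2) with ⟨h, _⟩ | ⟨h, _⟩ <;> rw [h] <;> linarith
  have fin' : ((t : ℤ) ^ 12 + c * m + t ^ 4 * m) * (2 * t) ≤ t ^ 4 * q := by exact_mod_cast fin
  have e2 : (2 : ℤ) ^ (n + 1) = 2 * t := by rw [ht]; push_cast; ring
  have tpos : (0 : ℤ) < (t : ℤ) ^ 4 := by positivity
  rw [e2]
  refine le_of_mul_le_mul_left ?_ tpos
  calc (t : ℤ) ^ 4 * (|(N1 : ℤ) - N2| * (2 * t)) = ((t : ℤ) ^ 4 * |(N1 : ℤ) - N2|) * (2 * t) := by ring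
    _ ≤ ((t : ℤ) ^ 12 + c * m + t ^ 4 * m) * (2 * t) := by gcongr
    _ ≤ _ := fin'

theorem stp_main {F : Type*} [Field F] [Fintype F] [DecidableEq F] (hodd : ringChar F ≠ 2)
    (A : Finset F) (hA : 1 ≤ A.card) (hA0 : ∀ a ∈ A, a ≠ 0)
    (hq : 2 ^ (14 * A.card) ≤ Fintype.card F) (ε : F → ℤ) (hε : ∀ a, ε a = 1 ∨ ε a = -1) :
    ∃ y : F, ∀ a ∈ A, quadraticChar F (y + a) = ε a := by
  by_contra hcon
  push Not at hcon
  set n := A.card with hn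
  have hχ : ∀ u : F, u = 0 ∨ quadraticChar F u = 1 ∨ quadraticChar F u = -1 := by
    intro u
    by_cases h : u = 0
    · exact Or.inl h
    · exact Or.inr (quadraticChar_dichotomy h)
  have hfac : ∀ y a : F, 0 ≤ 1 + ε a * quadraticChar F (y + a) ∧
      1 + ε a * quadraticChar F (y + a) ≤ 2 := by
    intro y a
    rcases hχ (y + a) with h | h | h <;> rcases hε a with h' | h' <;> simp [h, h']
  set T := ∑ y : F, ∏ a ∈ A, (1 + ε a * quadraticChar F (y + a)) with hT
  have hTle : T ≤ n * 2 ^ n := by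
    have h1 : ∀ y : F, ∏ a ∈ A, (1 + ε a * quadraticChar F (y + a)) ≤
        ∑ a ∈ A, if y = -a then (2 : ℤ) ^ n else 0 := by
      intro y
      obtain ⟨a, ha, hne⟩ := hcon y
      have hnn : ∀ b ∈ A, (0 : ℤ) ≤ if y = -b then (2 : ℤ) ^ n else 0 := by
        intro b _; split_ifs <;> positivity
      by_cases hya : y = -a
      · calc _ ≤ ∏ a ∈ A, (2 : ℤ) :=
              Finset.prod_le_prod (fun b _ => (hfac y b).1) (fun b _ => (hfac y b).2)
          _ = if y = -a then (2 : ℤ) ^ n else 0 := by simp [hya, hn]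
          _ ≤ _ := Finset.single_le_sum hnn ha
      · have : ∏ a ∈ A, (1 + ε a * quadraticChar F (y + a)) = 0 := by
          apply Finset.prod_eq_zero ha
          have hya' : y + a ≠ 0 := fun h => hya (eq_neg_of_add_eq_zero_left h)
          rcases quadraticChar_dichotomy hya' with h | h <;> rcases hε a with h' | h' <;>
            simp [h, h'] at hne ⊢
        rw [this]
        exact Finset.sum_nonneg hnn
    refine (Finset.sum_le_sum fun y _ => h1 y).trans ?_
    rw [Finset.sum_comm]
    simp [hn]
  have hTexp : T = ∑ B ∈ A.powerset, (∏ a ∈ B, ε a) * ∑ y : F, ∏ a ∈ B, quadraticChar F (y + a) := by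
    rw [hT]
    simp_rw [Finset.prod_one_add]
    rw [Finset.sum_comm]
    refine Finset.sum_congr rfl fun B _ => ?_
    rw [Finset.mul_sum]
    refine Finset.sum_congr rfl fun y _ => ?_
    rw [Finset.prod_mul_distrib]
  have hεB : ∀ B : Finset F, |∏ a ∈ B, ε a| = 1 := by
    intro B
    rw [Finset.abs_prod]
    apply Finset.prod_eq_one
    intro a _
    rcases hε a with h | h <;> simp [h]
  have hsplit : T = (Fintype.card F : ℤ) + ∑ B ∈ A.powerset.erase ∅,
      (∏ a ∈ B, ε a) * ∑ y : F, ∏ a ∈ B, quadraticChar F (y + a) := by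
    rw [hTexp, ← Finset.add_sum_erase _ _ (Finset.empty_mem_powerset A)]
    simp
  set R := ∑ B ∈ A.powerset.erase ∅,
      (∏ a ∈ B, ε a) * ∑ y : F, ∏ a ∈ B, quadraticChar F (y + a) with hR
  have hRle : |R| * 2 ^ (n + 1) ≤ 2 ^ n * (Fintype.card F : ℤ) := by
    calc |R| * 2 ^ (n + 1) ≤ (∑ B ∈ A.powerset.erase ∅,
          |(∏ a ∈ B, ε a) * ∑ y : F, ∏ a ∈ B, quadraticChar F (y + a)|) * 2 ^ (n + 1) := by
          gcongr
          exact Finset.abs_sum_le_sum_abs _ _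
      _ = ∑ B ∈ A.powerset.erase ∅,
          |∑ y : F, ∏ a ∈ B, quadraticChar F (y + a)| * 2 ^ (n + 1) := by
          rw [Finset.sum_mul]
          refine Finset.sum_congr rfl fun B _ => ?_
          rw [abs_mul, hεB, one_mul]
      _ ≤ ∑ B ∈ A.powerset.erase ∅, (Fintype.card F : ℤ) := by
          refine Finset.sum_le_sum fun B hB => ?_
          rw [Finset.mem_erase, Finset.mem_powerset] at hB
          exact stp_charsum hodd n hA hq B (Finset.nonempty_iff_ne_empty.2 hB.1)
            (Finset.card_le_card hB.2) (fun a ha => hA0 a (hB.2 ha))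
      _ ≤ ∑ B ∈ A.powerset, (Fintype.card F : ℤ) :=
          Finset.sum_le_sum_of_subset_of_nonneg (Finset.erase_subset _ _)
            (fun _ _ _ => by positivity)
      _ = 2 ^ n * (Fintype.card F : ℤ) := by simp [hn]
  have hR2 : |R| * 2 ≤ (Fintype.card F : ℤ) := by
    have : (0 : ℤ) < 2 ^ n := by positivity
    refine le_of_mul_le_mul_left ?_ this
    calc (2 : ℤ) ^ n * (|R| * 2) = |R| * 2 ^ (n + 1) := by ring
      _ ≤ _ := hRle
  have hqT : (Fintype.card F : ℤ) ≤ 2 * (n * 2 ^ n) := by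
    have := neg_abs_le R
    linarith
  have hbig : 2 * (n * 2 ^ n) < 2 ^ (14 * n) := by
    have h1 : n < 2 ^ n := Nat.lt_two_pow_self
    have h2 : 2 ≤ 2 ^ n := by omega
    calc 2 * (n * 2 ^ n) < 2 * (2 ^ n * 2 ^ n) := by
          have : 0 < 2 ^ n := by positivity
          gcongr
      _ ≤ 2 ^ n * (2 ^ n * 2 ^ n) := by gcongr
      _ = 2 ^ (3 * n) := by ring
      _ ≤ 2 ^ (14 * n) := Nat.pow_le_pow_right (by norm_num) (by omega)
  have hqT' : Fintype.card F ≤ 2 * (n * 2 ^ n) := by exact_mod_cast hqT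
  omega

/-- Let `F` be a finite field of odd characteristic with `q` elements and
`A ⊆ F` a subset with `q ≥ 2 ^ (14 * |A|)`. Then every subset `E ⊆ A` is coded by some
`y ∈ F`: `E` is exactly the set of `a ∈ A` such that `y + a` is a square in `F`. -/
theorem statement12 (F : Type*) [Field F] [Fintype F] (hodd : ringChar F ≠ 2)
    (A : Finset F) (hq : 2 ^ (14 * A.card) ≤ Fintype.card F) :
    ∀ E ⊆ A, ∃ y : F, ∀ a ∈ A, (a ∈ E ↔ ∃ z : F, z ^ 2 = y + a) := by
  classical
  intro E hE
  rcases Nat.eq_zero_or_pos A.card with h0 | hpos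
  · rw [Finset.card_eq_zero] at h0
    subst h0
    exact ⟨0, by simp⟩
  obtain ⟨b, hb⟩ : ∃ b : F, b ∉ A := by
    by_contra hcon
    push Not at hcon
    have h1 : A.card = Fintype.card F := by
      rw [Finset.eq_univ_of_forall hcon, Finset.card_univ]
    have h2 : A.card < 2 ^ A.card := Nat.lt_two_pow_self
    have h3 : 2 ^ A.card ≤ 2 ^ (14 * A.card) := Nat.pow_le_pow_right (by norm_num) (by omega)
    omega
  have hinj : Function.Injective (fun a : F => a - b) := sub_left_injective
  have hcard : (A.image fun a => a - b).card = A.card := Finset.card_image_of_injective _ hinj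
  obtain ⟨y, hy⟩ := stp_main hodd (A.image fun a => a - b) (by omega)
    (by
      intro a ha h
      obtain ⟨a', ha', rfl⟩ := Finset.mem_image.1 ha
      exact hb ((sub_eq_zero.1 h) ▸ ha'))
    (by rw [hcard]; exact hq) (fun a => if a + b ∈ E then 1 else -1)
    (by intro a; split_ifs <;> simp)
  refine ⟨y - b, fun a ha => ?_⟩
  have h1 := hy (a - b) (Finset.mem_image_of_mem _ ha)
  have e1 : y + (a - b) = y - b + a := by ring
  simp only [sub_add_cancel, e1] at h1
  have hsq : (∃ z : F, z ^ 2 = y - b + a) ↔ IsSquare (y - b + a) := by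
    rw [isSquare_iff_exists_sq]
    exact ⟨fun ⟨z, hz⟩ => ⟨z, hz.symm⟩, fun ⟨z, hz⟩ => ⟨z, hz.symm⟩⟩
  rw [hsq]
  by_cases haE : a ∈ E
  · rw [if_pos haE] at h1
    have hne : y - b + a ≠ 0 := by
      intro h; rw [h] at h1; simp at h1
    exact ⟨fun _ => (quadraticChar_one_iff_isSquare hne).1 h1, fun _ => haE⟩
  · rw [if_neg haE] at h1
    exact ⟨fun h => absurd h haE, fun h => absurd h (quadraticChar_neg_one_iff_not_isSquare.1 h1)⟩
end

section
/- Let F be a finite field of characteristic 2 with q elements, where q ≡ 1 (mod 3), and let A ⊆ F be a subset with q ≥ 2^{14·|A|}. Then for every subset E ⊆ A there exists y ∈ F such that E = {a ∈ A : there exists z ∈ F with z³ = y + a}; that is, E is exactly the set of elements a of A for which y + a is a cube in F. -/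
open Polynomial in
/-- The polynomial method step (Stepanov method after Bombieri, over a field of square order). -/
lemma stepanov_core {F : Type*} [Field F] [Fintype F] [CharP F 2] (m Q : ℕ) (hQ : Q = 2 ^ m)
    (hcard : Fintype.card F = Q ^ 2) (U V c e D K J : ℕ)
    (hU : 3 * U = c * Q + 1) (hc : c = 1 ∨ c = 2) (he : e = 1 ∨ e = 2)
    (f h : F[X]) (hf : f = X ^ e * h) (hh : h.coeff 0 ≠ 0) (hD : f.natDegree ≤ D)
    (hK : 1 ≤ K) (hJ : 1 ≤ J) (hKQ : 3 * K + 1 < Q)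
    (hN : Q * (K - 1) + 2 * V * D + J < 3 * J * K)
    (S : Finset F) (s : F) (hS : ∀ x ∈ S, f.eval x ^ (U * Q) = s * f.eval x ^ V) :
    S.card ≤ (K - 1) + Q * (J - 1) + 2 * U * D := by
  classical
  set I := Fin 3 × Fin J × Fin K
  set N := Q * (K - 1) + 2 * V * D + J with hNdef
  let B : I → F[X] := fun t => X ^ (Q * t.2.2.val) * (C s * f ^ V) ^ t.1.val * X ^ t.2.1.val
  have hBdeg : ∀ t, (B t).natDegree < N := by
    rintro ⟨i, j, k⟩
    have h1 : (B (i, j, k)).natDegree ≤ Q * k + i * (V * D) + j := by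
      refine natDegree_mul_le_of_le (natDegree_mul_le_of_le (natDegree_X_pow_le _) ?_)
        (natDegree_X_pow_le _)
      refine natDegree_pow_le_of_le _ ?_
      refine (natDegree_C_mul_le _ _).trans ?_
      exact natDegree_pow_le_of_le _ hD
    have h2 : Q * (k : ℕ) ≤ Q * (K - 1) := Nat.mul_le_mul_left _ (by omega)
    have h3 : (i : ℕ) * (V * D) ≤ 2 * (V * D) := Nat.mul_le_mul_right _ (by omega)
    have h4 := j.2
    have h5 : 2 * V * D = 2 * (V * D) := by ring
    omega
  let L : (I → F) →ₗ[F] (Fin N → F) :=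
    LinearMap.pi fun r => ∑ t : I, ((B t).coeff r) • LinearMap.proj t
  have hker : LinearMap.ker L ≠ ⊥ := by
    apply LinearMap.ker_ne_bot_of_finrank_lt
    simp only [Module.finrank_fintype_fun_eq_card, Fintype.card_fin, I, Fintype.card_prod]
    nlinarith
  obtain ⟨l, hl, hl0⟩ := (Submodule.ne_bot_iff _).1 hker
  have hzero : ∑ t : I, C (l t) * B t = 0 := by
    ext r
    rw [finsetSum_coeff, coeff_zero]
    by_cases hr : r < N
    · have := congrFun (LinearMap.mem_ker.1 hl) ⟨r, hr⟩
      simp only [L, LinearMap.pi_apply, LinearMap.sum_apply, LinearMap.smul_apply,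
        LinearMap.proj_apply, smul_eq_mul, Pi.zero_apply] at this
      rw [← this]
      exact Finset.sum_congr rfl fun t _ => by rw [coeff_C_mul, mul_comm]
    · refine Finset.sum_eq_zero fun t _ => ?_
      rw [coeff_C_mul, coeff_eq_zero_of_natDegree_lt ((hBdeg t).trans_le (not_lt.1 hr)), mul_zero]
  have hfrob : ∀ x : F, (x ^ Q) ^ Q = x := by
    intro x
    rw [← pow_mul, ← sq, ← hcard, FiniteField.pow_card]
  have hQpos : 0 < Q := by rw [hQ]; positivity
  let T : I → F[X] := fun t => X ^ t.2.2.val * f ^ (U * t.1.val) * X ^ (Q * t.2.1.val)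
  let R : F[X] := ∑ t : I, C (l t ^ Q) * T t
  have hRroot : ∀ x ∈ S, R.eval x = 0 := by
    intro x hx
    have h1 : (R.eval x) ^ Q = 0 := by
      have h2 : (∑ t : I, C (l t) * B t).eval x = 0 := by rw [hzero, eval_zero]
      rw [← h2]
      simp only [R, eval_finsetSum]
      rw [hQ, sum_pow_char_pow, ← hQ]
      refine Finset.sum_congr rfl fun t _ => ?_
      simp only [T, B, eval_mul, eval_C, eval_pow, eval_X, mul_pow, hfrob]
      rw [← mul_pow s, ← hS x hx]
      have e1 : (x ^ (Q * (t.2.1 : ℕ))) ^ Q = x ^ (t.2.1 : ℕ) := by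
        conv_rhs => rw [← hfrob (x ^ (t.2.1 : ℕ))]
        ring
      rw [e1]
      ring
    exact pow_eq_zero_iff (by omega) |>.1 h1
  let ex : I → ℕ := fun t => t.2.2.val + Q * t.2.1.val + e * (U * t.1.val)
  have hinj : Function.Injective ex := by
    rintro ⟨i, j, k⟩ ⟨i', j', k'⟩ hE
    simp only [ex] at hE
    have key : ∀ (i i' : Fin 3) (j j' : Fin J) (k k' : Fin K),
        (k : ℕ) + Q * j + e * (U * i) = k' + Q * j' + e * (U * i') →
        3 * (j : ℕ) + e * c * i ≤ 3 * j' + e * c * i' := by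
      intro i i' j j' k k' hE
      by_contra hlt
      push Not at hlt
      have a1 : Q * (3 * (j' : ℕ) + e * c * i' + 1) ≤ Q * (3 * (j : ℕ) + e * c * i) :=
        Nat.mul_le_mul_left _ hlt
      have a2 : 3 * ((k : ℕ) + Q * j + e * (U * i))
          = Q * (3 * (j : ℕ) + e * c * i) + (3 * k + e * i) := by
        calc _ = 3 * (k : ℕ) + 3 * (Q * j) + e * i * (3 * U) := by ring
          _ = _ := by rw [hU]; ring
      have a3 : 3 * ((k' : ℕ) + Q * j' + e * (U * i'))
          = Q * (3 * (j' : ℕ) + e * c * i') + (3 * k' + e * i') := by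
        calc _ = 3 * (k' : ℕ) + 3 * (Q * j') + e * i' * (3 * U) := by ring
          _ = _ := by rw [hU]; ring
      have a4 : e * (i' : ℕ) ≤ 2 * 2 := Nat.mul_le_mul (by omega) (by omega)
      have a5 := k'.2
      rw [mul_add] at a1
      omega
    have h1 := le_antisymm (key i i' j j' k k' hE) (key i' i j' j k' k hE.symm)
    have hi := i.2
    have hi' := i'.2
    have hii : (i : ℕ) = i' := by
      rcases hc with rfl | rfl <;> rcases he with rfl | rfl <;> omega
    rw [hii] at h1 hE
    have hjj : (j : ℕ) = j' := by omega
    rw [hjj] at hE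
    have hkk : (k : ℕ) = k' := by omega
    exact Prod.ext (Fin.ext hii) (Prod.ext (Fin.ext hjj) (Fin.ext hkk))
  have hT : ∀ t, T t = X ^ ex t * h ^ (U * t.1.val) := by
    intro t
    simp only [T, ex, hf, mul_pow]
    ring
  have hR0 : R ≠ 0 := by
    obtain ⟨t0, ht0⟩ : ∃ t, l t ≠ 0 := by
      by_contra hcon
      push Not at hcon
      exact hl0 (funext hcon)
    obtain ⟨t, ht, hmin⟩ := Finset.exists_min_image (Finset.univ.filter fun t => l t ≠ 0) ex
      ⟨t0, by simp [ht0]⟩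
    have ht' : l t ≠ 0 := by simpa using ht
    intro hR
    have h1 : R.coeff (ex t) = 0 := by rw [hR, coeff_zero]
    rw [finsetSum_coeff, Finset.sum_eq_single t] at h1
    · rw [coeff_C_mul, hT, coeff_X_pow_mul', if_pos le_rfl, Nat.sub_self, coeff_zero_eq_eval_zero,
        eval_pow, ← coeff_zero_eq_eval_zero] at h1
      exact mul_ne_zero (pow_ne_zero _ ht') (pow_ne_zero _ hh) h1
    · intro t' _ hne
      by_cases hlt : l t' = 0
      · rw [hlt, zero_pow (by omega), C_0, zero_mul, coeff_zero]
      · have h2 := hmin t' (by simp [hlt])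
        have h3 : ex t' ≠ ex t := fun hh => hne (hinj hh)
        rw [coeff_C_mul, hT, coeff_X_pow_mul', if_neg (by omega), mul_zero]
    · simp
  have hRdeg : R.natDegree ≤ (K - 1) + Q * (J - 1) + 2 * U * D := by
    refine natDegree_sum_le_of_forall_le _ _ fun t _ => ?_
    refine (natDegree_C_mul_le _ _).trans ?_
    obtain ⟨i, j, k⟩ := t
    have h1 : (T (i, j, k)).natDegree ≤ k + (U * i) * D + Q * j := by
      refine natDegree_mul_le_of_le (natDegree_mul_le_of_le (natDegree_X_pow_le _) ?_)
        (natDegree_X_pow_le _)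
      exact natDegree_pow_le_of_le _ hD
    have h2 : Q * (j : ℕ) ≤ Q * (J - 1) := Nat.mul_le_mul_left _ (by omega)
    have h3 : (U * i) * D ≤ 2 * U * D := Nat.mul_le_mul_right _ (by nlinarith [i.2])
    have h4 := k.2
    omega
  refine le_trans ?_ hRdeg
  refine card_le_degree_of_subset_roots ?_
  intro x hx
  rw [mem_roots hR0]
  exact hRroot x hx

open Polynomial in
/-- Upper bound for the number of points where `f` takes values in a given coset of the cubes. -/
lemma stepanov_count {F : Type*} [Field F] [Fintype F] [CharP F 2] (m Q : ℕ) (hQ : Q = 2 ^ m)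
    (hcard : Fintype.card F = Q ^ 2) (M e D : ℕ) (hM : 3 * M + 1 = Q ^ 2)
    (he : e = 1 ∨ e = 2)
    (f h : F[X]) (hf : f = X ^ e * h) (hh : h.coeff 0 ≠ 0) (hD : f.natDegree ≤ D)
    (hD1 : 1 ≤ D) (hDQ : 10 * D + 5 < Q)
    (S : Finset F) (s : F) (hS : ∀ x ∈ S, f.eval x ^ M = s) :
    3 * S.card ≤ Q ^ 2 + 3 * (Q * (4 * D + 2)) := by
  have h3 : Q % 3 = 1 ∨ Q % 3 = 2 := by
    have h0 : Q % 3 ≠ 0 := by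
      intro h0
      have h1 : 3 ∣ Q ^ 2 := (Nat.dvd_of_mod_eq_zero h0).trans (dvd_pow_self _ two_ne_zero)
      omega
    omega
  rcases h3 with h3 | h3
  · obtain ⟨w, hw⟩ : ∃ w, Q = 3 * w + 1 := ⟨Q / 3, by omega⟩
    obtain ⟨v, rfl⟩ : ∃ v, w = v + 2 := ⟨w - 2, by omega⟩
    have hv : 10 * D < 3 * v + 2 := by omega
    have hMw : M = 3 * (v + 2) ^ 2 + 2 * (v + 2) := by
      rw [hw] at hM; nlinarith
    have := stepanov_core m Q hQ hcard (2 * (v + 2) + 1) (v + 3) 2 e D (v + 1) (v + 4 + 2 * D)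
      (by rw [hw]; ring) (Or.inr rfl) he f h hf hh hD (by omega) (by omega) (by omega)
      (by rw [hw, Nat.add_sub_cancel]; nlinarith) S (s ^ 2) (by
        intro x hx
        rw [← hS x hx, ← pow_mul, ← pow_add]
        congr 1
        rw [hMw, hw]; ring)
    rw [Nat.add_sub_cancel, show v + 4 + 2 * D - 1 = v + 3 + 2 * D by omega] at this
    rw [hw] at this ⊢
    nlinarith
  · obtain ⟨w, hw⟩ : ∃ w, Q = 3 * w + 2 := ⟨Q / 3, by omega⟩
    obtain ⟨v, rfl⟩ : ∃ v, w = v + 1 := ⟨w - 1, by omega⟩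
    have hv : 10 * D < 3 * v := by omega
    have hMw : M = 3 * (v + 1) ^ 2 + 4 * (v + 1) + 1 := by
      rw [hw] at hM; nlinarith
    have := stepanov_core m Q hQ hcard (v + 2) (v + 2) 1 e D (v + 1) (v + 3 + 2 * D)
      (by rw [hw]; ring) (Or.inl rfl) he f h hf hh hD (by omega) (by omega) (by omega)
      (by rw [hw, Nat.add_sub_cancel]; nlinarith) S s (by
        intro x hx
        rw [← hS x hx, ← pow_add]
        congr 1
        rw [hMw, hw]; ring)
    rw [Nat.add_sub_cancel, show v + 3 + 2 * D - 1 = v + 2 + 2 * D by omega] at this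
    rw [hw] at this ⊢
    nlinarith

open Polynomial in
/-- Character sum bound. -/
lemma charsum_bound {F : Type*} [Field F] [Fintype F] [CharP F 2] (m Q : ℕ) (hQ : Q = 2 ^ m)
    (hcard : Fintype.card F = Q ^ 2) (M e D : ℕ) (hM : 3 * M + 1 = Q ^ 2)
    (χ : MulChar F ℂ) (ζ : ℂ) (hζ : IsPrimitiveRoot ζ 3)
    (hval : ∀ u : F, u ≠ 0 → ∃ i < 3, χ u = ζ ^ i)
    (hcube : ∀ u : F, χ u = 1 → ∃ z, z ^ 3 = u)
    (he : e = 1 ∨ e = 2)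
    (f h : F[X]) (hf : f = X ^ e * h) (hh : h.coeff 0 ≠ 0) (hD : f.natDegree ≤ D)
    (hD1 : 1 ≤ D) (hDQ : 10 * D + 5 < Q) :
    ‖∑ x : F, χ (f.eval x)‖ ≤ 3 * (Q * (4 * D + 2)) + D := by
  classical
  have hf0 : f ≠ 0 := by
    rw [hf]
    refine mul_ne_zero (pow_ne_zero _ X_ne_zero) ?_
    rintro rfl
    simp at hh
  have hζ0 : ζ ≠ 0 := hζ.ne_zero (by norm_num)
  let S : ℕ → Finset F := fun i => Finset.univ.filter fun x => χ (f.eval x) = ζ ^ i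
  have hχ0 : ∀ u : F, χ u ≠ 0 → u ≠ 0 := by
    rintro u hu rfl
    exact hu (MulChar.map_zero χ)
  have hSb : ∀ i, 3 * (S i).card ≤ Q ^ 2 + 3 * (Q * (4 * D + 2)) := by
    intro i
    rcases (S i).eq_empty_or_nonempty with hemp | ⟨x0, hx0⟩
    · rw [hemp]; simp
    refine stepanov_count m Q hQ hcard M e D hM he f h hf hh hD hD1 hDQ (S i)
      (f.eval x0 ^ M) ?_
    intro x hx
    have h1 : χ (f.eval x) = ζ ^ i := by simpa [S] using hx
    have h2 : χ (f.eval x0) = ζ ^ i := by simpa [S] using hx0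
    have n1 : f.eval x ≠ 0 := hχ0 _ (by rw [h1]; exact pow_ne_zero _ hζ0)
    have n2 : f.eval x0 ≠ 0 := hχ0 _ (by rw [h2]; exact pow_ne_zero _ hζ0)
    obtain ⟨z, hz⟩ := hcube (f.eval x / f.eval x0) (by
      have : χ (f.eval x / f.eval x0) * χ (f.eval x0) = χ (f.eval x0) := by
        rw [← map_mul, div_mul_cancel₀ _ n2, h1, h2]
      exact mul_right_cancel₀ (by rw [h2]; exact pow_ne_zero _ hζ0) (this.trans (one_mul _).symm))
    have hz0 : z ≠ 0 := by
      rintro rfl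
      rw [zero_pow (by norm_num)] at hz
      exact div_ne_zero n1 n2 hz.symm
    have h4 : f.eval x = z ^ 3 * f.eval x0 := by rw [hz, div_mul_cancel₀ _ n2]
    rw [h4, mul_pow, ← pow_mul, show 3 * M = Fintype.card F - 1 by omega,
      FiniteField.pow_card_sub_one_eq_one z hz0, one_mul]
  have hinj : ∀ i < 3, ∀ j < 3, ζ ^ i = ζ ^ j → i = j := fun i hi j hj hij =>
    hζ.pow_inj hi hj hij
  have hsum : ∑ x : F, χ (f.eval x) = ∑ i ∈ Finset.range 3, ((S i).card : ℂ) * ζ ^ i := by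
    have h1 : ∀ x : F, χ (f.eval x)
        = ∑ i ∈ Finset.range 3, if χ (f.eval x) = ζ ^ i then ζ ^ i else 0 := by
      intro x
      by_cases hx : f.eval x = 0
      · rw [hx, MulChar.map_zero]
        refine (Finset.sum_eq_zero fun i _ => if_neg (pow_ne_zero _ hζ0).symm).symm
      · obtain ⟨i, hi, hxi⟩ := hval _ hx
        rw [Finset.sum_eq_single i]
        · rw [if_pos hxi, hxi]
        · intro j hj hne
          rw [if_neg]
          rw [hxi]
          exact fun hh => hne (hinj i hi j (by simpa using hj) hh).symm
        · intro hh; simp at hh; omega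
    rw [Finset.sum_congr rfl fun x _ => h1 x, Finset.sum_comm]
    refine Finset.sum_congr rfl fun i _ => ?_
    rw [← Finset.sum_filter, Finset.sum_const, nsmul_eq_mul]
  have htotal : Q ^ 2 ≤ ∑ i ∈ Finset.range 3, (S i).card + D := by
    have h1 : (Finset.univ : Finset F) ⊆ (Finset.range 3).biUnion S ∪ f.roots.toFinset := by
      intro x _
      by_cases hx : f.eval x = 0
      · refine Finset.mem_union_right _ ?_
        rw [Multiset.mem_toFinset, mem_roots hf0]
        exact hx
      · obtain ⟨i, hi, hxi⟩ := hval _ hx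
        refine Finset.mem_union_left _ ?_
        rw [Finset.mem_biUnion]
        exact ⟨i, by simpa using hi, by simpa [S] using hxi⟩
    have h2 := Finset.card_le_card h1
    rw [Finset.card_univ, hcard] at h2
    have h3 : f.roots.toFinset.card ≤ D :=
      (Multiset.toFinset_card_le _).trans ((card_roots' f).trans hD)
    have h4 := Finset.card_union_le ((Finset.range 3).biUnion S) f.roots.toFinset
    have h5 : ((Finset.range 3).biUnion S).card ≤ ∑ i ∈ Finset.range 3, (S i).card :=
      Finset.card_biUnion_le
    omega
  set b : ℝ := (Q : ℝ) ^ 2 / 3 + Q * (4 * D + 2) with hb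
  have hgeom : ∑ i ∈ Finset.range 3, ζ ^ i = 0 := hζ.geom_sum_eq_zero (by norm_num)
  have hsum2 : ∑ x : F, χ (f.eval x)
      = - ∑ i ∈ Finset.range 3, ((b - (S i).card : ℝ) : ℂ) * ζ ^ i := by
    rw [hsum]
    push_cast
    simp only [sub_mul, Finset.sum_sub_distrib, ← Finset.mul_sum, hgeom]
    ring
  rw [hsum2, norm_neg]
  have hζn : ‖ζ‖ = 1 := hζ.norm'_eq_one (by norm_num)
  calc ‖∑ i ∈ Finset.range 3, ((b - (S i).card : ℝ) : ℂ) * ζ ^ i‖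
      ≤ ∑ i ∈ Finset.range 3, (b - (S i).card) := by
        refine norm_sum_le_of_le _ fun i _ => ?_
        rw [norm_mul, norm_pow, hζn, one_pow, mul_one, Complex.norm_real, Real.norm_eq_abs,
          abs_of_nonneg]
        have : (3 * (S i).card : ℝ) ≤ Q ^ 2 + 3 * (Q * (4 * D + 2)) := by exact_mod_cast hSb i
        rw [hb]; linarith
    _ = 3 * b - ∑ i ∈ Finset.range 3, ((S i).card : ℝ) := by
        rw [Finset.sum_sub_distrib]; simp
    _ ≤ _ := by
        have : ((Q : ℝ) ^ 2) ≤ ∑ i ∈ Finset.range 3, ((S i).card : ℝ) + D := by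
          exact_mod_cast htotal
        rw [hb]; linarith

open Polynomial in
lemma charsum_prod {F : Type*} [Field F] [Fintype F] [CharP F 2] (m Q : ℕ) (hQ : Q = 2 ^ m)
    (hcard : Fintype.card F = Q ^ 2) (M : ℕ) (hM : 3 * M + 1 = Q ^ 2)
    (χ : MulChar F ℂ) (ζ : ℂ) (hζ : IsPrimitiveRoot ζ 3)
    (hval : ∀ u : F, u ≠ 0 → ∃ i < 3, χ u = ζ ^ i)
    (hcube : ∀ u : F, χ u = 1 → ∃ z, z ^ 3 = u)
    {ι : Type*} [Fintype ι] (α : ι → F) (hα : Function.Injective α)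
    (hn : 1 ≤ Fintype.card ι) (hnQ : 20 * Fintype.card ι + 5 < Q)
    (p : ι → Fin 3) (hp : p ≠ 0) :
    ‖∑ y : F, ∏ i, χ (y + α i) ^ (p i : ℕ)‖
      ≤ 3 * (Q * (8 * Fintype.card ι + 2)) + 2 * Fintype.card ι := by
  classical
  obtain ⟨i0, hi0⟩ : ∃ i, p i ≠ 0 := Function.ne_iff.1 hp
  have hi0' : (p i0 : ℕ) ≠ 0 := fun hh => hi0 (Fin.ext hh)
  let h : F[X] := ∏ i ∈ Finset.univ.erase i0, (X + C (α i - α i0)) ^ (p i : ℕ)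
  let f : F[X] := ∏ i, (X + C (α i - α i0)) ^ (p i : ℕ)
  have hf : f = X ^ (p i0 : ℕ) * h := by
    simp only [f, h]
    rw [← Finset.mul_prod_erase Finset.univ _ (Finset.mem_univ i0)]
    simp
  have hh : h.coeff 0 ≠ 0 := by
    rw [coeff_zero_eq_eval_zero, eval_prod, Finset.prod_ne_zero_iff]
    intro i hi
    rw [eval_pow]
    refine pow_ne_zero _ ?_
    simp only [eval_add, eval_X, eval_C, zero_add]
    rw [sub_ne_zero]
    exact fun hh => (Finset.mem_erase.1 hi).1 (hα hh)
  have hD : f.natDegree ≤ 2 * Fintype.card ι := by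
    refine (natDegree_prod_le _ _).trans ?_
    calc _ ≤ ∑ i : ι, 2 := Finset.sum_le_sum fun i _ => by
            refine (natDegree_pow_le_of_le (m := 1) _ (natDegree_X_add_C _).le).trans ?_
            have := (p i).2
            omega
      _ = _ := by simp [mul_comm]
  have := charsum_bound m Q hQ hcard M (p i0) (2 * Fintype.card ι) hM χ ζ hζ hval hcube
    (by have := (p i0).2; omega) f h hf hh hD (by omega) (by omega)
  have heq : ∑ y : F, ∏ i, χ (y + α i) ^ (p i : ℕ) = ∑ x : F, χ (f.eval x) := by
    rw [← Equiv.sum_comp (Equiv.subRight (α i0))]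
    refine Finset.sum_congr rfl fun x _ => ?_
    simp only [f, eval_prod, map_prod, eval_pow, map_pow, eval_add, eval_X, eval_C,
      Equiv.subRight_apply]
    refine Finset.prod_congr rfl fun i _ => ?_
    congr 2
    ring
  rw [heq]
  refine this.trans (le_of_eq ?_)
  push_cast
  ring

lemma pattern_exists {F : Type*} [Field F] [Fintype F] [CharP F 2] (m Q : ℕ) (hQ : Q = 2 ^ m)
    (hcard : Fintype.card F = Q ^ 2) (M : ℕ) (hM : 3 * M + 1 = Q ^ 2)
    (χ : MulChar F ℂ) (ζ : ℂ) (hζ : IsPrimitiveRoot ζ 3)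
    (hval : ∀ u : F, u ≠ 0 → ∃ i < 3, χ u = ζ ^ i)
    (hcube : ∀ u : F, χ u = 1 → ∃ z, z ^ 3 = u)
    {ι : Type*} [Fintype ι] (α : ι → F) (hα : Function.Injective α)
    (hn : 1 ≤ Fintype.card ι) (hnQ : 128 ^ Fintype.card ι ≤ Q)
    (c : ι → ℂ) (hc : ∀ i, c i ^ 3 = 1) :
    ∃ y : F, ∀ i, χ (y + α i) = c i := by
  classical
  set n := Fintype.card ι with hndef
  have hnum : ∀ k : ℕ, 1 ≤ k → 3 ^ k * (24 * k + 7) ≤ 128 ^ k ∧ 20 * k + 5 < 128 ^ k := by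
    intro k hk
    induction k, hk using Nat.le_induction with
    | base => norm_num
    | succ k hk ih =>
      obtain ⟨h1, h2⟩ := ih
      rw [pow_succ, pow_succ]
      constructor
      · calc 3 ^ k * 3 * (24 * (k + 1) + 7) = 3 ^ k * (3 * (24 * (k + 1) + 7)) := by ring
          _ ≤ 3 ^ k * ((24 * k + 7) * 128) := Nat.mul_le_mul_left _ (by omega)
          _ = 3 ^ k * (24 * k + 7) * 128 := by ring
          _ ≤ _ := Nat.mul_le_mul_right _ h1
      · omega
  obtain ⟨hnum1, hnum2⟩ := hnum n hn
  by_contra hcon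
  push Not at hcon
  let W : F → ℂ := fun y => ∏ i, ∑ j : Fin 3, (c i ^ 2 * χ (y + α i)) ^ (j : ℕ)
  have hval3 : ∀ u : F, u ≠ 0 → χ u ^ 3 = 1 := by
    intro u hu
    obtain ⟨i, _, hi⟩ := hval u hu
    rw [hi, ← pow_mul, mul_comm, pow_mul, hζ.pow_eq_one, one_pow]
  have hχn : ∀ u : F, ‖χ u‖ ≤ 1 := by
    intro u
    by_cases hu : u = 0
    · rw [hu, MulChar.map_zero]; simp
    · exact (Complex.norm_eq_one_of_pow_eq_one (hval3 u hu) (by norm_num)).le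
  have hcn : ∀ i, ‖c i‖ = 1 := fun i => Complex.norm_eq_one_of_pow_eq_one (hc i) (by norm_num)
  have hW0 : ∀ y, (∀ i, y + α i ≠ 0) → W y = 0 := by
    intro y hy
    obtain ⟨i, hi⟩ := hcon y
    refine Finset.prod_eq_zero (Finset.mem_univ i) ?_
    have hz3 : (c i ^ 2 * χ (y + α i)) ^ 3 = 1 := by
      rw [mul_pow, hval3 _ (hy i), ← pow_mul, mul_comm 2 3, pow_mul, hc]; norm_num
    have hz1 : c i ^ 2 * χ (y + α i) ≠ 1 := by
      intro hh
      apply hi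
      calc χ (y + α i) = c i ^ 3 * χ (y + α i) := by rw [hc, one_mul]
        _ = c i * (c i ^ 2 * χ (y + α i)) := by ring
        _ = c i := by rw [hh, mul_one]
    generalize c i ^ 2 * χ (y + α i) = z at hz3 hz1
    simp only [Fin.sum_univ_three, Fin.val_zero, Fin.val_one, Fin.val_two, pow_zero, pow_one]
    have : (z - 1) * (1 + z + z ^ 2) = 0 := by linear_combination hz3
    exact (mul_eq_zero.1 this).resolve_left (sub_ne_zero.2 hz1)
  have hWn : ∀ y, ‖W y‖ ≤ 3 ^ n := by
    intro y
    simp only [W, norm_prod]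
    calc _ ≤ ∏ i : ι, (3 : ℝ) := by
          refine Finset.prod_le_prod (fun i _ => norm_nonneg _) fun i _ => ?_
          calc _ ≤ ∑ j : Fin 3, (1 : ℝ) := by
                refine norm_sum_le_of_le _ fun j _ => ?_
                rw [norm_pow, norm_mul, norm_pow, hcn, one_pow, one_mul]
                exact pow_le_one₀ (norm_nonneg _) (hχn _)
            _ = 3 := by simp
      _ = 3 ^ n := by simp [hndef]
  have hup : ‖∑ y, W y‖ ≤ n * 3 ^ n := by
    let Z : Finset F := Finset.univ.image fun i => - α i
    have h1 : ∑ y, W y = ∑ y ∈ Z, W y := by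
      symm
      refine Finset.sum_subset (Finset.subset_univ _) fun y _ hy => hW0 y fun i hi => hy ?_
      simp only [Z, Finset.mem_image, Finset.mem_univ, true_and]
      exact ⟨i, (eq_neg_of_add_eq_zero_left hi).symm⟩
    rw [h1]
    calc _ ≤ ∑ y ∈ Z, (3 : ℝ) ^ n := norm_sum_le_of_le _ fun y _ => hWn y
      _ = Z.card * 3 ^ n := by simp
      _ ≤ _ := by
        refine mul_le_mul_of_nonneg_right ?_ (by positivity)
        have : Z.card ≤ n := Finset.card_image_le.trans (by simp [hndef])
        exact_mod_cast this
  have hexp : ∑ y, W y = ∑ p : ι → Fin 3,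
      (∏ i, (c i ^ 2) ^ (p i : ℕ)) * ∑ y : F, ∏ i, χ (y + α i) ^ (p i : ℕ) := by
    simp only [Finset.mul_sum]
    rw [Finset.sum_comm]
    refine Finset.sum_congr rfl fun y _ => ?_
    simp only [W]
    rw [Finset.prod_univ_sum]
    simp only [Fintype.piFinset_univ, mul_pow, Finset.prod_mul_distrib]
  rw [← Finset.add_sum_erase _ _ (Finset.mem_univ (0 : ι → Fin 3))] at hexp
  set B : ℝ := 3 * (Q * (8 * n + 2)) + 2 * n with hB
  have hB0 : 0 ≤ B := by positivity
  have herr : ‖∑ p ∈ Finset.univ.erase (0 : ι → Fin 3),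
      (∏ i, (c i ^ 2) ^ (p i : ℕ)) * ∑ y : F, ∏ i, χ (y + α i) ^ (p i : ℕ)‖ ≤ 3 ^ n * B := by
    calc _ ≤ ∑ p ∈ Finset.univ.erase (0 : ι → Fin 3), B := by
          refine norm_sum_le_of_le _ fun p hp => ?_
          rw [norm_mul, norm_prod]
          simp only [norm_pow, hcn, one_pow, Finset.prod_const_one, one_mul]
          exact charsum_prod m Q hQ hcard M hM χ ζ hζ hval hcube α hα hn (by omega) p
            (Finset.mem_erase.1 hp).1
      _ ≤ ∑ p : ι → Fin 3, B :=
          Finset.sum_le_sum_of_subset_of_nonneg (Finset.erase_subset _ _) fun _ _ _ => hB0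
      _ = 3 ^ n * B := by simp [hndef]
  have hmain : (∏ i, (c i ^ 2) ^ (((0 : ι → Fin 3) i : Fin 3) : ℕ)) *
      ∑ y : F, ∏ i, χ (y + α i) ^ (((0 : ι → Fin 3) i : Fin 3) : ℕ) = ((Q ^ 2 : ℕ) : ℂ) := by
    simp [← hcard]
  rw [hmain] at hexp
  have hfin : ((Q ^ 2 : ℕ) : ℝ) ≤ n * 3 ^ n + 3 ^ n * B := by
    have h1 : ((Q ^ 2 : ℕ) : ℂ) = ∑ y, W y - ∑ p ∈ Finset.univ.erase (0 : ι → Fin 3),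
      (∏ i, (c i ^ 2) ^ (p i : ℕ)) * ∑ y : F, ∏ i, χ (y + α i) ^ (p i : ℕ) := by
      rw [hexp]; ring
    calc ((Q ^ 2 : ℕ) : ℝ) = ‖((Q ^ 2 : ℕ) : ℂ)‖ := (Complex.norm_natCast _).symm
      _ ≤ _ := by
        rw [h1]
        exact (norm_sub_le _ _).trans (add_le_add hup herr)
  rw [hB] at hfin
  have hfin' : Q ^ 2 ≤ n * 3 ^ n + 3 ^ n * (3 * (Q * (8 * n + 2)) + 2 * n) := by
    exact_mod_cast hfin
  have hlt : 3 ^ n * (3 * n) < 3 ^ n * Q := Nat.mul_lt_mul_of_pos_left (by omega) (by positivity)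
  have h2 : 3 ^ n * (24 * n + 7) * Q ≤ Q * Q := Nat.mul_le_mul_right _ (hnum1.trans hnQ)
  nlinarith

/-- Let `F` be a finite field of characteristic 2 with `q` elements, where
`q ≡ 1 (mod 3)`, and `A ⊆ F` a subset with `q ≥ 2 ^ (14 * |A|)`. Then every subset `E ⊆ A`
is coded by some `y ∈ F`: `E` is exactly the set of `a ∈ A` such that `y + a` is a cube. -/
theorem statement13 (F : Type*) [Field F] [Fintype F] (hchar : ringChar F = 2)
    (hmod : Fintype.card F % 3 = 1)
    (A : Finset F) (hq : 2 ^ (14 * A.card) ≤ Fintype.card F) :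
    ∀ E ⊆ A, ∃ y : F, ∀ a ∈ A, (a ∈ E ↔ ∃ z : F, z ^ 3 = y + a) := by
  classical
  intro E hE
  rcases A.eq_empty_or_nonempty with rfl | hA
  · exact ⟨0, by simp⟩
  have hA1 : 1 ≤ A.card := hA.card_pos
  have : CharP F 2 := hchar ▸ ringChar.charP F
  obtain ⟨k, _, hk⟩ := FiniteField.card F 2
  obtain ⟨m, hm⟩ : ∃ m, (k : ℕ) = 2 * m := by
    rcases Nat.even_or_odd' (k : ℕ) with ⟨m, hm | hm⟩
    · exact ⟨m, hm⟩
    · exfalso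
      rw [hk, hm, pow_succ, pow_mul, Nat.mul_mod, Nat.pow_mod] at hmod
      norm_num at hmod
  set Q := 2 ^ m with hQ
  have hcard : Fintype.card F = Q ^ 2 := by rw [hk, hm, hQ, ← pow_mul, mul_comm]
  have hQn : 128 ^ A.card ≤ Q := by
    rw [hk] at hq
    have h1 : 14 * A.card ≤ k := (Nat.pow_le_pow_iff_right (by norm_num)).1 hq
    rw [show 128 = 2 ^ 7 by norm_num, ← pow_mul, hQ]
    exact Nat.pow_le_pow_right (by norm_num) (by omega)
  obtain ⟨M, hM⟩ : ∃ M, 3 * M + 1 = Q ^ 2 := ⟨Q ^ 2 / 3, by omega⟩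
  have hζ : IsPrimitiveRoot (Complex.exp (2 * Real.pi * Complex.I / (3 : ℕ))) 3 :=
    Complex.isPrimitiveRoot_exp 3 (by norm_num)
  set ζ := Complex.exp (2 * Real.pi * Complex.I / (3 : ℕ))
  obtain ⟨χ, hχ⟩ := MulChar.exists_mulChar_orderOf F (n := 3) (by omega) hζ
  have hχ3 : χ ^ 3 = 1 := by rw [← hχ, pow_orderOf_eq_one]
  have hval : ∀ u : F, u ≠ 0 → ∃ i < 3, χ u = ζ ^ i := fun u hu =>
    MulChar.exists_apply_eq_pow hχ3 hζ hu
  have hcube : ∀ u : F, χ u = 1 → ∃ z, z ^ 3 = u := by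
    intro u hu
    have hu0 : u ≠ 0 := by
      rintro rfl
      rw [MulChar.map_zero] at hu
      exact zero_ne_one hu
    obtain ⟨g, hg⟩ := IsCyclic.exists_monoid_generator (α := Fˣ)
    obtain ⟨j, hj⟩ := hg (Units.mk0 u hu0)
    have hj' : (g : F) ^ j = u := by
      have := congrArg Units.val hj
      simpa using this
    obtain ⟨i, hi, hgi⟩ := hval g g.ne_zero
    have hi0 : i ≠ 0 := by
      rintro rfl
      have : χ = 1 := by
        ext x
        obtain ⟨r, hr⟩ := hg x
        rw [← hr]
        simp [hgi]
      rw [this, orderOf_one] at hχ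
      norm_num at hχ
    rw [← hj', map_pow, hgi, ← pow_mul, hζ.pow_eq_one_iff_dvd] at hu
    have h3 : 3 ∣ j := (Nat.Coprime.dvd_of_dvd_mul_left (by
      have : i = 1 ∨ i = 2 := by omega
      rcases this with rfl | rfl <;> norm_num) hu)
    obtain ⟨r, rfl⟩ := h3
    exact ⟨(g : F) ^ r, by rw [← hj', ← pow_mul, mul_comm]⟩
  obtain ⟨y, hy⟩ := pattern_exists m Q hQ hcard M hM χ ζ hζ hval hcube
    (fun a : A => (a : F)) Subtype.val_injective (by simpa using hA1) (by simpa using hQn)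
    (fun a => if (a : F) ∈ E then 1 else ζ) (fun a => by
      split_ifs
      · norm_num
      · exact hζ.pow_eq_one)
  refine ⟨y, fun a ha => ?_⟩
  have hya := hy ⟨a, ha⟩
  simp only at hya
  constructor
  · intro haE
    rw [if_pos haE] at hya
    exact hcube _ hya
  · rintro ⟨z, hz⟩
    by_contra haE
    rw [if_neg haE, ← hz, map_pow] at hya
    have hz0 : z ≠ 0 := by
      rintro rfl
      rw [MulChar.map_zero, zero_pow (by norm_num)] at hya
      exact hζ.ne_zero (by norm_num) hya.symm
    have h1 : χ z ^ 3 = 1 := by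
      obtain ⟨i, _, hi⟩ := hval z hz0
      rw [hi, ← pow_mul, mul_comm, pow_mul, hζ.pow_eq_one, one_pow]
    rw [h1] at hya
    exact hζ.ne_one (by norm_num) hya.symm
end

section
/- For every n ≥ 1 there is a constant C_n > 0 such that for every finite field 𝔽_q of odd characteristic and all pairwise distinct elements b_1, …, b_n ∈ 𝔽_q, the set S := {x ∈ 𝔽_q : x + b_1 is a square in 𝔽_q, and x + b_i is not a square in 𝔽_q for all 2 ≤ i ≤ n} satisfies | |S| − q/2ⁿ | ≤ C_n · q^{1/2}. -/
open Polynomial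

/-- Hasse derivatives of a multiple of `f ^ a`. -/
lemma dvd_hasseDeriv {F : Type} [Field F] (f g : F[X]) (a : ℕ) :
    ∀ k, f ^ (a - k) ∣ hasseDeriv k (f ^ a * g) := by
  induction a with
  | zero => intro k; simp
  | succ a ih =>
    intro k
    rw [pow_succ', mul_assoc, hasseDeriv_mul]
    refine Finset.dvd_sum ?_
    rintro ⟨i, j⟩ hij
    rw [Finset.HasAntidiagonal.mem_antidiagonal] at hij
    simp only at hij ⊢
    rcases Nat.eq_zero_or_pos i with hi | hi
    · subst hi
      rw [hasseDeriv_zero']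
      have h1 := mul_dvd_mul_left f (ih j)
      rw [← pow_succ'] at h1
      exact (pow_dvd_pow f (by omega)).trans h1
    · exact ((pow_dvd_pow f (by omega)).trans (ih j)).mul_left _

lemma hasseDeriv_quot {F : Type} [Field F] (f g : F[X]) (hf : f.Monic) (a k : ℕ) (hk : k ≤ a) :
    ∃ P : F[X], hasseDeriv k (f ^ a * g) = f ^ (a - k) * P ∧
      P.natDegree ≤ g.natDegree + k * f.natDegree := by
  obtain ⟨P, hP⟩ := dvd_hasseDeriv f g a k
  refine ⟨P, hP, ?_⟩
  by_cases h0 : P = 0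
  · simp [h0]
  have h1 := natDegree_hasseDeriv_le (f ^ a * g) k
  have h2 : (f ^ a * g).natDegree ≤ a * f.natDegree + g.natDegree := by
    refine natDegree_mul_le.trans ?_
    rw [hf.natDegree_pow]
  rw [hP, (hf.pow _).natDegree_mul' h0, hf.natDegree_pow] at h1
  obtain ⟨d, rfl⟩ := Nat.exists_eq_add_of_le hk
  have h3 : k + d - k = d := by omega
  rw [h3] at h1
  rw [add_mul] at h2
  omega

lemma X_sub_C_pow_dvd_iff_hasse {F : Type} [Field F] (h : F[X]) (x : F) (l : ℕ) :
    (X - C x) ^ l ∣ h ↔ ∀ k < l, (hasseDeriv k h).eval x = 0 := by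
  rw [X_sub_C_pow_dvd_iff, X_pow_dvd_iff]
  simp only [← taylor_coeff]
  rfl

lemma X_pow_card_dvd {F : Type} [Field F] [Fintype F] (x : F) (l j : ℕ)
    (hl : l ≤ Fintype.card F) :
    (X - C x) ^ l ∣ (X ^ (j * Fintype.card F) - C (x ^ j) : F[X]) := by
  have h1 : (X - C x : F[X]) ^ Fintype.card F = X ^ Fintype.card F - C x := by
    rw [← FiniteField.expand_card]; simp
  have h2 : (X ^ Fintype.card F - C x : F[X]) ∣ X ^ (j * Fintype.card F) - C (x ^ j) := by
    rw [mul_comm, pow_mul, C_pow]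
    exact sub_dvd_pow_sub_pow _ _ _
  exact ((pow_dvd_pow _ hl).trans (h1 ▸ dvd_refl _)).trans h2

lemma eval_hasseDeriv_mul_X_pow {F : Type} [Field F] [Fintype F] (g : F[X]) (x : F) (l j k : ℕ)
    (hl : l ≤ Fintype.card F) (hk : k < l) :
    (hasseDeriv k (g * X ^ (j * Fintype.card F))).eval x = x ^ j * (hasseDeriv k g).eval x := by
  have h1 := (X_pow_card_dvd x l j hl).mul_left g
  have h2 := (X_sub_C_pow_dvd_iff_hasse _ x l).1 h1 k hk
  rw [mul_sub, map_sub, eval_sub, sub_eq_zero] at h2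
  rw [h2, mul_comm g, ← smul_eq_C_mul, map_smul]
  simp

/-- The exact quotient used in the auxiliary linear system. -/
lemma exists_G {F : Type} [Field F] [Fintype F] (f : F[X]) (hf : f.Monic) (l c : ℕ) (ε : F)
    (hl : l ≤ Fintype.card F) (k : ℕ) (hk : k < l) (b : Bool) (j a : ℕ) :
    ∃ G : F[X], G.natDegree ≤ a + k * f.natDegree + j ∧
      ∀ x, f.eval x ^ c = ε →
        (hasseDeriv k (f ^ (l + if b then c else 0) * X ^ a * X ^ (j * Fintype.card F))).eval x
          = f.eval x ^ (l - k) * G.eval x := by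
  obtain ⟨P, hP, hd⟩ := hasseDeriv_quot f (X ^ a) hf (l + if b then c else 0) k (by omega)
  rw [natDegree_X_pow] at hd
  refine ⟨C (if b then ε else 1) * P * X ^ j, ?_, ?_⟩
  · refine natDegree_mul_le.trans ?_
    rw [natDegree_X_pow]
    have := natDegree_C_mul_le (if b then ε else 1) P
    omega
  · intro x hx
    rw [eval_hasseDeriv_mul_X_pow _ x l j k hl hk, hP]
    cases b
    · simp; ring
    · have : l + c - k = (l - k) + c := by omega
      simp [this, pow_add, hx]; ring

lemma indep_step {F : Type} [Field F] [Fintype F] (f : F[X])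
    (h0 : f.eval 0 ≠ 0) (β : F) (hβ : Odd (f.rootMultiplicity β)) (c : ℕ)
    (hc : Fintype.card F = 2 * c + 1) (r s : F[X])
    (hr : 2 * r.natDegree + f.natDegree < Fintype.card F)
    (hs : 2 * s.natDegree < Fintype.card F)
    (h : X ^ Fintype.card F ∣ r + s * f ^ c) : r = 0 ∧ s = 0 := by
  set q := Fintype.card F with hq
  have hf0 : f ≠ 0 := by rintro rfl; simp at h0
  have h1 : X ^ q ∣ f ^ q - C (f.eval 0) := by
    have : (X : F[X]) ∣ f - C (f.eval 0) := by
      rw [X_dvd_iff]; simp [coeff_zero_eq_eval_zero]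
    have h2 := pow_dvd_pow_of_dvd this q
    rw [← FiniteField.expand_card (f - _), map_sub, FiniteField.expand_card, expand_C] at h2
    exact h2
  have h2 : X ^ q ∣ r ^ 2 * f - C (f.eval 0) * s ^ 2 := by
    have e : r ^ 2 * f - C (f.eval 0) * s ^ 2 =
        (r + s * f ^ c) * ((r - s * f ^ c) * f) + (f ^ q - C (f.eval 0)) * s ^ 2 := by
      rw [hc]; ring
    rw [e]
    exact dvd_add (h.mul_right _) (h1.mul_right _)
  have h3 : r ^ 2 * f - C (f.eval 0) * s ^ 2 = 0 := by
    by_contra hne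
    have := natDegree_le_of_dvd h2 hne
    rw [natDegree_X_pow] at this
    have h4 : (r ^ 2 * f - C (f.eval 0) * s ^ 2).natDegree < q := by
      refine (natDegree_sub_le _ _).trans_lt (max_lt ?_ ?_)
      · refine natDegree_mul_le.trans_lt ?_
        rw [natDegree_pow]; exact hr
      · refine (natDegree_C_mul_le _ _).trans_lt ?_
        rw [natDegree_pow]; exact hs
    omega
  rw [sub_eq_zero] at h3
  have hC : C (f.eval 0) ≠ 0 := by simpa using h0
  have key : r = 0 := by
    by_contra hr0
    have hs0 : s ≠ 0 := by
      rintro rfl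
      simp [hr0, hf0] at h3
    have h5 := congrArg (rootMultiplicity β) h3
    rw [rootMultiplicity_mul (by simp [hr0, hf0]), rootMultiplicity_mul (by simp [hs0, h0]),
      rootMultiplicity_C, pow_two, pow_two, rootMultiplicity_mul (by simp [hr0]),
      rootMultiplicity_mul (by simp [hs0])] at h5
    obtain ⟨t, ht⟩ := hβ
    omega
  refine ⟨key, ?_⟩
  rw [key] at h3
  simpa [h0] using h3.symm

lemma indep {F : Type} [Field F] [Fintype F] (f : F[X])
    (h0 : f.eval 0 ≠ 0) (β : F) (hβ : Odd (f.rootMultiplicity β)) (c : ℕ)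
    (hc : Fintype.card F = 2 * c + 1) (J : ℕ) : ∀ (r s : Fin J → F[X])
    (_ : ∀ j, 2 * (r j).natDegree + f.natDegree < Fintype.card F)
    (_ : ∀ j, 2 * (s j).natDegree < Fintype.card F)
    (_ : ∑ j, (r j + s j * f ^ c) * X ^ ((j : ℕ) * Fintype.card F) = 0),
    ∀ j, r j = 0 ∧ s j = 0 := by
  induction J with
  | zero => intro r s _ _ _ j; exact j.elim0
  | succ J ih =>
    intro r s hr hs h
    rw [Fin.sum_univ_succ] at h
    have e : ∑ j : Fin J, (r j.succ + s j.succ * f ^ c) * X ^ ((j.succ : ℕ) * Fintype.card F)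
        = X ^ Fintype.card F *
          ∑ j : Fin J, (r j.succ + s j.succ * f ^ c) * X ^ ((j : ℕ) * Fintype.card F) := by
      rw [Finset.mul_sum]
      refine Finset.sum_congr rfl fun j _ => ?_
      rw [Fin.val_succ]; ring
    rw [e] at h
    have z := indep_step f h0 β hβ c hc (r 0) (s 0) (hr 0) (hs 0) (by
      have : r 0 + s 0 * f ^ c = - (X ^ Fintype.card F *
          ∑ j : Fin J, (r j.succ + s j.succ * f ^ c) * X ^ ((j : ℕ) * Fintype.card F)) := by
        rw [eq_neg_iff_add_eq_zero]; simpa using h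
      rw [this]
      exact (dvd_mul_right _ _).neg_right)
    rw [z.1, z.2] at h
    simp only [zero_mul, add_zero, zero_add, mul_eq_zero, pow_eq_zero_iff', X_ne_zero, false_and,
      false_or] at h
    have := ih (fun j => r j.succ) (fun j => s j.succ) (fun j => hr _) (fun j => hs _) h
    intro j
    exact Fin.cases z this j

lemma sum_rearrange {F : Type} [Field F] (f : F[X]) (l c J A q : ℕ)
    (v : Bool × Fin J × Fin A → F) :
    ∑ i, C (v i) * (f ^ (l + if i.1 then c else 0) * X ^ (i.2.2 : ℕ) * X ^ ((i.2.1 : ℕ) * q)) =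
    f ^ l * ∑ j : Fin J, ((∑ a : Fin A, C (v (false, j, a)) * X ^ (a : ℕ)) +
      (∑ a : Fin A, C (v (true, j, a)) * X ^ (a : ℕ)) * f ^ c) * X ^ ((j : ℕ) * q) := by
  rw [Fintype.sum_prod_type, Fintype.sum_bool, Fintype.sum_prod_type,
    Fintype.sum_prod_type, ← Finset.sum_add_distrib, Finset.mul_sum]
  refine Finset.sum_congr rfl fun j _ => ?_
  have e1 : ∀ a : Fin A, C (v (true, j, a)) * (f ^ (l + if true then c else 0) * X ^ (a : ℕ) *
      X ^ ((j : ℕ) * q)) = (C (v (true, j, a)) * X ^ (a : ℕ)) *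
        (f ^ l * f ^ c * X ^ ((j : ℕ) * q)) := by
    intro a
    rw [if_pos rfl, pow_add]
    generalize (X : F[X]) ^ ((j : ℕ) * q) = Y
    generalize (X : F[X]) ^ (a : ℕ) = Z
    ring
  have e2 : ∀ a : Fin A, C (v (false, j, a)) * (f ^ (l + if false then c else 0) * X ^ (a : ℕ) *
      X ^ ((j : ℕ) * q)) = (C (v (false, j, a)) * X ^ (a : ℕ)) *
        (f ^ l * X ^ ((j : ℕ) * q)) := by
    intro a
    rw [if_neg (by simp), add_zero]
    generalize (X : F[X]) ^ ((j : ℕ) * q) = Y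
    generalize (X : F[X]) ^ (a : ℕ) = Z
    ring
  rw [Finset.sum_congr rfl fun a _ => e1 a, Finset.sum_congr rfl fun a _ => e2 a,
    ← Finset.sum_mul, ← Finset.sum_mul]
  generalize (X : F[X]) ^ ((j : ℕ) * q) = Y
  generalize ∑ a : Fin A, C (v (true, j, a)) * X ^ (a : ℕ) = U
  generalize ∑ a : Fin A, C (v (false, j, a)) * X ^ (a : ℕ) = W
  ring

set_option maxHeartbeats 1000000 in
lemma stepanov {F : Type} [Field F] [Fintype F] (f : F[X]) (hf : f.Monic)
    (h0 : f.eval 0 ≠ 0) (β : F) (hβ : Odd (f.rootMultiplicity β)) (c : ℕ)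
    (hc : Fintype.card F = 2 * c + 1) (l A J : ℕ) (hl : l ≤ Fintype.card F)
    (hA : 2 * A + f.natDegree ≤ Fintype.card F)
    (hcount : l * (A + l * f.natDegree + J) < 2 * (J * A)) (ε : F) (T : Finset F)
    (hT : ∀ x ∈ T, f.eval x ^ c = ε) :
    T.card * l ≤ (l + c) * f.natDegree + A + J * Fintype.card F := by
  classical
  set q := Fintype.card F with hq
  set m := f.natDegree with hm
  set D := A + l * m + J with hD
  choose G hGd hG using fun (k : Fin l) (i : Bool × Fin J × Fin A) =>
    exists_G f hf l c ε hl k k.2 i.1 i.2.1 i.2.2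
  let H : Bool × Fin J × Fin A → F[X] := fun i =>
    f ^ (l + if i.1 then c else 0) * X ^ (i.2.2 : ℕ) * X ^ ((i.2.1 : ℕ) * q)
  let M : Matrix (Fin l × Fin D) (Bool × Fin J × Fin A) F := fun kd i =>
    (G kd.1 i).coeff kd.2
  have hker : LinearMap.ker M.mulVecLin ≠ ⊥ := by
    apply LinearMap.ker_ne_bot_of_finrank_lt
    simpa using hcount
  obtain ⟨v, hv, hv0⟩ := (Submodule.ne_bot_iff _).1 hker
  rw [LinearMap.mem_ker, Matrix.mulVecLin_apply] at hv
  have hsum : ∀ k : Fin l, ∑ i, C (v i) * G k i = 0 := by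
    intro k
    ext d
    rw [finsetSum_coeff, coeff_zero]
    by_cases hd : d < D
    · have := congrFun hv (k, ⟨d, hd⟩)
      simp only [Matrix.mulVec, dotProduct, M, Pi.zero_apply] at this
      rw [← this]
      refine Finset.sum_congr rfl fun i _ => ?_
      rw [coeff_C_mul, mul_comm]
    · refine Finset.sum_eq_zero fun i _ => ?_
      rw [coeff_C_mul, coeff_eq_zero_of_natDegree_lt, mul_zero]
      have h1 := hGd k i
      rw [← hm] at h1
      have h2 : (k : ℕ) * m ≤ l * m := Nat.mul_le_mul_right _ k.2.le
      have h3 := i.2.1.2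
      have h4 := i.2.2.2
      omega
  set h : F[X] := ∑ i, C (v i) * H i with hh
  have hdvd : ∀ x ∈ T, (X - C x) ^ l ∣ h := by
    intro x hx
    rw [X_sub_C_pow_dvd_iff_hasse]
    intro k hk
    have e1 : (hasseDeriv k h).eval x = ∑ i, v i * (hasseDeriv k (H i)).eval x := by
      rw [hh, map_sum, eval_finsetSum]
      refine Finset.sum_congr rfl fun i _ => ?_
      rw [← smul_eq_C_mul, map_smul, eval_smul, smul_eq_mul]
    rw [e1]
    have e2 : ∀ i, v i * (hasseDeriv k (H i)).eval x
        = f.eval x ^ (l - k) * (C (v i) * G ⟨k, hk⟩ i).eval x := by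
      intro i
      rw [hG ⟨k, hk⟩ i x (hT x hx)]
      simp; ring
    simp only [e2]
    rw [← Finset.mul_sum, ← eval_finsetSum, hsum]
    simp
  have hne : h ≠ 0 := by
    intro hz
    apply hv0
    let r : Bool → Fin J → F[X] := fun b j => ∑ a : Fin A, C (v (b, j, a)) * X ^ (a : ℕ)
    have hApos : 0 < A := by
      rcases Nat.eq_zero_or_pos A with h | h
      · rw [h] at hcount; simp at hcount
      · exact h
    have hAr : ∀ b j, (r b j).natDegree ≤ A - 1 := by
      intro b j
      refine natDegree_sum_le_of_forall_le _ _ fun a _ => ?_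
      refine (natDegree_C_mul_X_pow_le _ _).trans ?_
      have := a.2
      omega
    have hdeg : ∀ b j, 2 * (r b j).natDegree + f.natDegree < q := by
      intro b j
      have := hAr b j
      omega
    have hzz : f ^ l * ∑ j, (r false j + r true j * f ^ c) * X ^ ((j : ℕ) * q) = 0 := by
      rw [← hz, hh]; exact (sum_rearrange f l c J A q v).symm
    rw [mul_eq_zero, or_iff_right (pow_ne_zero _ hf.ne_zero)] at hzz
    have hres := indep f h0 β hβ c hc J (r false) (r true) (hdeg _)
      (fun j => by have := hdeg true j; omega) hzz
    have hr0 : ∀ b j, r b j = 0 := by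
      intro b j
      cases b
      · exact (hres j).1
      · exact (hres j).2
    funext ⟨b, j, a⟩
    have := congrArg (fun p => p.coeff (a : ℕ)) (hr0 b j)
    simp only [r, finsetSum_coeff, coeff_C_mul, coeff_X_pow, coeff_zero] at this
    rw [Finset.sum_eq_single a] at this
    · simpa using this
    · intro a' _ ha'
      rw [if_neg, mul_zero]
      intro e; exact ha' (Fin.ext e.symm)
    · simp
  have hprod : ∏ x ∈ T, (X - C x) ^ l ∣ h := by
    refine Finset.prod_dvd_of_coprime ?_ hdvd
    intro x _ y _ hxy
    exact (pairwise_coprime_X_sub_C (s := fun x : F => x) Function.injective_id hxy).pow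
  have hd1 := natDegree_le_of_dvd hprod hne
  rw [natDegree_prod_of_monic _ _ (fun x _ => (monic_X_sub_C x).pow l)] at hd1
  simp only [natDegree_pow, natDegree_X_sub_C, mul_one, Finset.sum_const, smul_eq_mul] at hd1
  refine hd1.trans ?_
  refine natDegree_sum_le_of_forall_le _ _ fun i _ => ?_
  refine (natDegree_C_mul_le _ _).trans ?_
  refine natDegree_mul_le.trans ?_
  refine (Nat.add_le_add_right natDegree_mul_le _).trans ?_
  rw [hf.natDegree_pow, natDegree_X_pow, natDegree_X_pow]
  have h1 : (l + if i.1 then c else 0) * f.natDegree ≤ (l + c) * m := by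
    apply Nat.mul_le_mul_right
    split_ifs <;> omega
  have h2 : (i.2.1 : ℕ) * q ≤ J * q := Nat.mul_le_mul_right _ i.2.1.2.le
  have := i.2.2.2
  omega

lemma count_ineq (q m l A J : ℕ) (hl : l * l ≤ q) (hl2 : 8 * (m + 3) ≤ l)
    (hA : q ≤ 2 * A + m + 1) (hJ : l + 2 * (m + 3) ≤ 2 * J + 1)
    (hJ2 : 2 * J ≤ l + 2 * (m + 3)) :
    l * (A + l * m + J) < 2 * (J * A) := by
  have h1 : (l + 2 * (m + 3)) * (2 * A) ≤ (2 * J + 1) * (2 * A) := Nat.mul_le_mul_right _ hJ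
  have h2 : l * (2 * J) ≤ l * (l + 2 * (m + 3)) := Nat.mul_le_mul_left _ hJ2
  have h3 : (2 * m + 5) * q ≤ (2 * m + 5) * (2 * A + m + 1) := Nat.mul_le_mul_left _ hA
  have h4 : (2 * m + 1) * (l * l) ≤ (2 * m + 1) * q := Nat.mul_le_mul_left _ hl
  have h5 : 8 * (m + 3) * l ≤ l * l := Nat.mul_le_mul_right _ hl2
  have h6 : 8 * (m + 3) * (8 * (m + 3)) ≤ l * l := Nat.mul_le_mul hl2 hl2
  nlinarith

lemma upper_bound {F : Type} [Field F] [Fintype F] (hF : ringChar F ≠ 2) (f : F[X])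
    (hf : f.Monic) (h0 : f.eval 0 ≠ 0) (β : F) (hβ : Odd (f.rootMultiplicity β)) (ε : F)
    (T : Finset F) (hT : ∀ x ∈ T, f.eval x ^ (Fintype.card F / 2) = ε) :
    (T.card : ℝ) ≤ (Fintype.card F : ℝ) / 2 +
      (10 * f.natDegree + 30) * Real.sqrt (Fintype.card F) := by
  have hodd := FiniteField.odd_card_of_char_ne_two hF
  have hTq : T.card ≤ Fintype.card F := Finset.card_le_univ T
  have hs := Real.mul_self_sqrt (Nat.cast_nonneg (α := ℝ) (Fintype.card F))
  have hs0 := Real.sqrt_nonneg (Fintype.card F : ℝ)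
  have hls := Real.nat_sqrt_le_real_sqrt (a := Fintype.card F)
  have hls2 := Real.real_sqrt_lt_nat_sqrt_succ (a := Fintype.card F)
  set s := Real.sqrt (Fintype.card F) with hsdef
  set m := f.natDegree with hm
  set q := Fintype.card F with hq
  set l := Nat.sqrt q with hldef
  have hlq : l * l ≤ q := Nat.sqrt_le q
  have hTq' : (T.card : ℝ) ≤ q := by exact_mod_cast hTq
  by_cases hl : 8 * (m + 3) ≤ l
  · have hmq : m ≤ q := by nlinarith
    have hstep := stepanov f hf h0 β hβ (q / 2) (by omega) l ((q - m) / 2) (l / 2 + (m + 3))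
      (by nlinarith) (by omega)
      (count_ineq q m l _ _ hlq hl (by omega) (by omega) (by omega)) ε T hT
    rw [← hq, ← hm] at hstep
    have hA : (((q - m) / 2 : ℕ) : ℝ) ≤ q / 2 := by
      have : 2 * ((q - m) / 2) ≤ q := by omega
      have : (2 : ℝ) * ((q - m) / 2 : ℕ) ≤ q := by exact_mod_cast this
      linarith
    have hJ : ((l / 2 : ℕ) : ℝ) ≤ l / 2 := Nat.cast_div_le
    have hc : ((q / 2 : ℕ) : ℝ) ≤ q / 2 := Nat.cast_div_le
    have hstep' : (T.card : ℝ) * l ≤ (l + (q / 2 : ℕ)) * m + ((q - m) / 2 : ℕ) +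
        ((l / 2 : ℕ) + (m + 3)) * q := by exact_mod_cast hstep
    have hl' : (8 : ℝ) * (m + 3) ≤ l := by exact_mod_cast hl
    have hm0 : (0 : ℝ) ≤ m := Nat.cast_nonneg m
    have hq0 : (0 : ℝ) ≤ q := Nat.cast_nonneg q
    have hlpos : (0 : ℝ) < l := by linarith
    have hsl : s ≤ 2 * l := by linarith
    have hqs : (q : ℝ) ≤ 2 * l * s := by rw [← hs]; gcongr
    have h1 : ((q / 2 : ℕ) : ℝ) * m ≤ q / 2 * m := by gcongr
    have h2 : ((l / 2 : ℕ) : ℝ) * q ≤ l / 2 * q := by gcongr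
    have h3 : (q : ℝ) * (3 / 2 * m + 7 / 2) ≤ 2 * l * s * (3 / 2 * m + 7 / 2) := by gcongr
    have h4 : (m : ℝ) * l ≤ m * l * s := by
      have : 1 ≤ s := by linarith
      exact le_mul_of_one_le_right (by positivity) this
    have h5 : (T.card : ℝ) * l ≤ (q / 2 + (4 * m + 7) * s) * l := by nlinarith
    have h6 := le_of_mul_le_mul_right h5 hlpos
    nlinarith [mul_nonneg hm0 hs0]
  · have : (l : ℝ) ≤ 8 * (m + 3) := by exact_mod_cast (not_le.1 hl).le
    have hm0 : (0 : ℝ) ≤ m := Nat.cast_nonneg m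
    have h1 : s * s ≤ (10 * m + 30) * s := by gcongr; linarith
    have hq0 : (0 : ℝ) ≤ q := Nat.cast_nonneg q
    linarith

lemma charsum_zero {F : Type} [Field F] [Fintype F] [DecidableEq F] (hF : ringChar F ≠ 2)
    (B : Finset F) (hB : B.Nonempty) (h0 : (0 : F) ∉ B) :
    |((∑ x : F, quadraticChar F (∏ b ∈ B, (x + b)) : ℤ) : ℝ)| ≤
      (21 * B.card + 60) * Real.sqrt (Fintype.card F) := by
  set f : F[X] := ∏ b ∈ B, (X + C b) with hf
  have hev : ∀ x, f.eval x = ∏ b ∈ B, (x + b) := by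
    intro x; rw [hf, eval_prod]; simp
  have hmon : f.Monic := monic_prod_of_monic _ _ fun b _ => monic_X_add_C b
  have hdeg : f.natDegree = B.card := by
    rw [hf, natDegree_prod_of_monic _ _ fun b _ => monic_X_add_C b]; simp
  have hf0 : f.eval 0 ≠ 0 := by
    rw [hev, Finset.prod_ne_zero_iff]
    intro b hb hb0
    rw [zero_add] at hb0
    exact h0 (hb0 ▸ hb)
  obtain ⟨b₀, hb₀⟩ := hB
  have hβ : Odd (f.rootMultiplicity (-b₀)) := by
    have e : f = (X - C (-b₀)) * ∏ b ∈ B.erase b₀, (X + C b) := by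
      rw [hf, ← Finset.mul_prod_erase _ _ hb₀]; simp
    have hz : (∏ b ∈ B.erase b₀, (X + C b)).rootMultiplicity (-b₀) = 0 := by
      apply rootMultiplicity_eq_zero
      rw [IsRoot.def, eval_prod, Finset.prod_eq_zero_iff]
      rintro ⟨b, hb, hb2⟩
      rw [Finset.mem_erase] at hb
      simp only [eval_add, eval_X, eval_C] at hb2
      exact hb.1 (neg_add_eq_zero.1 hb2).symm
    rw [e, rootMultiplicity_mul (e ▸ hmon.ne_zero), rootMultiplicity_X_sub_C_self, hz]
    exact odd_one
  have hN : ∀ ε : ℤ, ((Finset.univ.filter fun x => quadraticChar F (f.eval x) = ε).card : ℝ) ≤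
      (Fintype.card F : ℝ) / 2 + (10 * f.natDegree + 30) * Real.sqrt (Fintype.card F) := by
    intro ε
    refine upper_bound hF f hmon hf0 (-b₀) hβ (ε : F) _ fun x hx => ?_
    rw [Finset.mem_filter] at hx
    rw [← quadraticChar_eq_pow_of_char_ne_two' hF, hx.2]
  have hN0 : (Finset.univ.filter fun x => f.eval x = 0).card ≤ B.card := by
    rw [← hdeg]
    have : (Finset.univ.filter fun x => f.eval x = 0) ⊆ f.roots.toFinset := by
      intro x hx
      rw [Finset.mem_filter] at hx
      simp [hmon.ne_zero, hx.2]
    exact (Finset.card_le_card this).trans ((Multiset.toFinset_card_le _).trans (card_roots' f))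
  have hsum : (∑ x : F, quadraticChar F (∏ b ∈ B, (x + b)) : ℤ) =
      (Finset.univ.filter fun x => quadraticChar F (f.eval x) = 1).card -
      (Finset.univ.filter fun x => quadraticChar F (f.eval x) = -1).card := by
    rw [Finset.card_filter, Finset.card_filter]
    push_cast
    rw [← Finset.sum_sub_distrib]
    refine Finset.sum_congr rfl fun x _ => ?_
    rw [← hev]
    by_cases hx : f.eval x = 0
    · simp [hx]
    · rcases quadraticChar_dichotomy hx with h | h <;> simp [h]
  have htot : (Fintype.card F : ℤ) =
      (Finset.univ.filter fun x => quadraticChar F (f.eval x) = 1).card +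
      (Finset.univ.filter fun x => quadraticChar F (f.eval x) = -1).card +
      (Finset.univ.filter fun x => f.eval x = 0).card := by
    rw [Finset.card_filter, Finset.card_filter, Finset.card_filter, ← Finset.card_univ,
      Finset.card_eq_sum_ones]
    push_cast
    rw [← Finset.sum_add_distrib, ← Finset.sum_add_distrib]
    refine Finset.sum_congr rfl fun x _ => ?_
    by_cases hx : f.eval x = 0
    · simp [hx]
    · rcases quadraticChar_dichotomy hx with h | h <;> simp [h, hx]
  have h1 := hN 1
  have h2 := hN (-1)
  rw [hsum]
  have htot' : (Fintype.card F : ℝ) =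
      (Finset.univ.filter fun x => quadraticChar F (f.eval x) = 1).card +
      (Finset.univ.filter fun x => quadraticChar F (f.eval x) = -1).card +
      (Finset.univ.filter fun x => f.eval x = 0).card := by exact_mod_cast htot
  have hN0' : ((Finset.univ.filter fun x => f.eval x = 0).card : ℝ) ≤ B.card := by
    exact_mod_cast hN0
  have hs1 : 1 ≤ Real.sqrt (Fintype.card F) := by
    rw [Real.one_le_sqrt]; exact_mod_cast Fintype.card_pos
  rw [hdeg] at h1 h2
  have hBs : (B.card : ℝ) ≤ B.card * Real.sqrt (Fintype.card F) :=
    le_mul_of_one_le_right (Nat.cast_nonneg _) hs1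
  push_cast
  have hz0 : (0 : ℝ) ≤ (Finset.univ.filter fun x => f.eval x = 0).card := Nat.cast_nonneg _
  rw [abs_le]
  constructor <;> nlinarith

lemma charsum {F : Type} [Field F] [Fintype F] [DecidableEq F] (hF : ringChar F ≠ 2)
    (B : Finset F) (hB : B.Nonempty) :
    |((∑ x : F, quadraticChar F (∏ b ∈ B, (x + b)) : ℤ) : ℝ)| ≤
      (21 * B.card + 60) * Real.sqrt (Fintype.card F) := by
  by_cases hbig : ∃ x₀ : F, -x₀ ∉ B
  · obtain ⟨x₀, hx₀⟩ := hbig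
    have := charsum_zero hF (B.map (Equiv.addRight x₀).toEmbedding) (by simpa using hB) (by
      simp only [Finset.mem_map, Equiv.coe_toEmbedding, Equiv.coe_addRight, not_exists, not_and]
      intro b hb hb0
      exact hx₀ (eq_neg_of_add_eq_zero_left hb0 ▸ hb))
    rw [Finset.card_map] at this
    suffices hsum : (∑ x : F, quadraticChar F (∏ b ∈ B, (x + b))) =
        ∑ x : F, quadraticChar F (∏ b ∈ B.map (Equiv.addRight x₀).toEmbedding, (x + b)) by
      rw [hsum]; exact this
    rw [← Equiv.sum_comp (Equiv.addRight x₀)]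
    refine Finset.sum_congr rfl fun x _ => ?_
    rw [Finset.prod_map]
    congr 1
    refine Finset.prod_congr rfl fun b _ => ?_
    simp; ring
  · push Not at hbig
    have hBu : B = Finset.univ := by
      ext x; simpa using hbig (-x)
    have hz : ∀ x : F, ∏ b ∈ B, (x + b) = 0 := fun x =>
      Finset.prod_eq_zero (hbig x) (add_neg_cancel x)
    simp only [hz, quadraticChar_zero, Finset.sum_const_zero, Int.cast_zero, abs_zero]
    positivity

set_option maxHeartbeats 1000000 in
/-- For every `n ≥ 1` there is a constant `C_n > 0` such that for every
finite field `𝔽_q` of odd characteristic and all pairwise distinct `b₁, …, b_n ∈ 𝔽_q`, the set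
`S = {x : x + b₁ is a square, and x + bᵢ is not a square for 2 ≤ i ≤ n}` satisfies
`| |S| - q / 2ⁿ | ≤ C_n √q`. -/
theorem statement18 (n : ℕ) (hn : 1 ≤ n) :
    ∃ C : ℝ, 0 < C ∧
      ∀ (F : Type) (_ : Field F) (_ : Fintype F), ringChar F ≠ 2 →
        ∀ b : Fin n → F, Function.Injective b →
          |(Set.ncard {x : F | (∃ z : F, z ^ 2 = x + b ⟨0, hn⟩) ∧
                ∀ i : Fin n, i ≠ ⟨0, hn⟩ → ¬ ∃ z : F, z ^ 2 = x + b i} : ℝ) -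
              (Fintype.card F : ℝ) / 2 ^ n| ≤ C * Real.sqrt (Fintype.card F) := by
  classical
  refine ⟨n + ∑ T ∈ (Finset.univ : Finset (Fin n)).powerset, (21 * T.card + 60 : ℝ), ?_, ?_⟩
  · have : (0 : ℝ) < n := by exact_mod_cast hn
    positivity
  intro F _ _ hF b hb
  set i₀ : Fin n := ⟨0, hn⟩ with hi₀
  set q := Fintype.card F with hq
  set s := Real.sqrt q with hs
  set χ := quadraticChar F with hχ
  set S : Finset F := Finset.univ.filter fun x => IsSquare (x + b i₀) ∧
    ∀ i, i ≠ i₀ → ¬ IsSquare (x + b i) with hS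
  have hSS : {x : F | (∃ z : F, z ^ 2 = x + b i₀) ∧
                ∀ i : Fin n, i ≠ i₀ → ¬ ∃ z : F, z ^ 2 = x + b i} = (S : Set F) := by
    ext x
    have : ∀ y : F, (∃ z : F, z ^ 2 = y) ↔ IsSquare y := fun y => by
      rw [isSquare_iff_exists_sq]; simp only [eq_comm]
    simp [hS, this]
  rw [hSS, Set.ncard_coe_finset]
  let e : Fin n → ℤ := fun i => if i = i₀ then 1 else -1
  have he : ∀ i, |e i| = 1 := by intro i; simp only [e]; split_ifs <;> simp
  let P : F → ℤ := fun x => ∏ i, (1 + e i * χ (x + b i))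
  have hfac : ∀ x i, 0 ≤ 1 + e i * χ (x + b i) ∧ 1 + e i * χ (x + b i) ≤ 2 := by
    intro x i
    by_cases h : x + b i = 0
    · rw [h, hχ, quadraticChar_zero]; simp
    · rcases quadraticChar_dichotomy h with h' | h' <;> simp only [hχ, h', e] <;>
        split_ifs <;> norm_num
  have hP0 : ∀ x, 0 ≤ P x := fun x => Finset.prod_nonneg fun i _ => (hfac x i).1
  have hP2 : ∀ x, P x ≤ 2 ^ n := by
    intro x
    have := Finset.prod_le_prod (s := Finset.univ) (fun i _ => (hfac x i).1)
      (fun i _ => (hfac x i).2)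
    simpa [P] using this
  set Z : Finset F := Finset.univ.image fun i => - b i with hZ
  have hgood : ∀ x, x ∉ Z → P x = if x ∈ S then 2 ^ n else 0 := by
    intro x hx
    have hne : ∀ i, x + b i ≠ 0 := by
      intro i hi
      apply hx
      rw [hZ, Finset.mem_image]
      exact ⟨i, Finset.mem_univ _, (eq_neg_of_add_eq_zero_left hi).symm⟩
    split_ifs with hxS
    · rw [hS, Finset.mem_filter] at hxS
      have : ∀ i, 1 + e i * χ (x + b i) = 2 := by
        intro i
        by_cases h : i = i₀
        · have h1 : χ (x + b i) = 1 := by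
            rw [hχ, quadraticChar_one_iff_isSquare (hne i), h]; exact hxS.2.1
          rw [h1]; simp [e, h]
        · have h1 : χ (x + b i) = -1 := by
            rw [hχ, quadraticChar_neg_one_iff_not_isSquare]; exact hxS.2.2 i h
          simp [e, h1, h]
      simp [P, this]
    · rw [hS, Finset.mem_filter] at hxS
      by_cases h : IsSquare (x + b i₀)
      · have : ∃ i, i ≠ i₀ ∧ IsSquare (x + b i) := by
          by_contra hcon
          push Not at hcon
          exact hxS ⟨Finset.mem_univ _, h, hcon⟩
        obtain ⟨i, hi, hsq⟩ := this
        refine Finset.prod_eq_zero (Finset.mem_univ i) ?_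
        have h1 : χ (x + b i) = 1 := by
          rw [hχ, quadraticChar_one_iff_isSquare (hne i)]; exact hsq
        simp [e, h1, hi]
      · refine Finset.prod_eq_zero (Finset.mem_univ i₀) ?_
        have h1 : χ (x + b i₀) = -1 := by
          rw [hχ, quadraticChar_neg_one_iff_not_isSquare]; exact h
        simp [e, h1]
  have hdiff : |(2 ^ n * S.card : ℤ) - ∑ x, P x| ≤ n * 2 ^ n := by
    have e1 : (2 ^ n * S.card : ℤ) = ∑ x, if x ∈ S then (2 : ℤ) ^ n else 0 := by
      rw [← Finset.sum_filter, Finset.sum_const]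
      simp [mul_comm]
    rw [e1, ← Finset.sum_sub_distrib]
    refine (Finset.abs_sum_le_sum_abs _ _).trans ?_
    have e2 : ∀ x : F, |(if x ∈ S then (2 : ℤ) ^ n else 0) - P x| ≤
        if x ∈ Z then (2 : ℤ) ^ n else 0 := by
      intro x
      by_cases hx : x ∈ Z
      · rw [if_pos hx, abs_le]
        have h1 := hP0 x
        have h2 := hP2 x
        have h3 : (0 : ℤ) < 2 ^ n := by positivity
        split_ifs <;> constructor <;> linarith
      · rw [hgood x hx, if_neg hx, sub_self, abs_zero]
    refine (Finset.sum_le_sum fun x _ => e2 x).trans ?_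
    rw [← Finset.sum_filter, Finset.sum_const, nsmul_eq_mul]
    have : Z.card ≤ n := by
      have := Finset.card_image_le (s := (Finset.univ : Finset (Fin n))) (f := fun i => - b i)
      simpa using this
    have h4 : ((Finset.univ.filter fun x => x ∈ Z).card : ℤ) ≤ n := by
      rw [Finset.filter_univ_mem]; exact_mod_cast this
    gcongr
  have hexp : ∑ x, P x = ∑ T ∈ (Finset.univ : Finset (Fin n)).powerset,
      (∏ i ∈ T, e i) * ∑ x, χ (∏ i ∈ T, (x + b i)) := by
    simp only [P, Finset.prod_one_add, Finset.prod_mul_distrib, Finset.mul_sum, map_prod]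
    rw [Finset.sum_comm]
  have hempty : (∅ : Finset (Fin n)) ∈ (Finset.univ : Finset (Fin n)).powerset := by simp
  have hq' : ∑ x, P x - q = ∑ T ∈ (Finset.univ : Finset (Fin n)).powerset.erase ∅,
      (∏ i ∈ T, e i) * ∑ x, χ (∏ i ∈ T, (x + b i)) := by
    rw [hexp, ← Finset.add_sum_erase _ _ hempty]
    simp [hq]
  have hs0 : 0 ≤ s := Real.sqrt_nonneg _
  have hmain : |((∑ x, P x - q : ℤ) : ℝ)| ≤
      (∑ T ∈ (Finset.univ : Finset (Fin n)).powerset, (21 * T.card + 60 : ℝ)) * s := by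
    rw [hq', Int.cast_sum]
    refine (Finset.abs_sum_le_sum_abs _ _).trans ?_
    rw [Finset.sum_mul]
    refine (Finset.sum_le_sum (g := fun T : Finset (Fin n) => (21 * T.card + 60 : ℝ) * s)
      fun T hT => ?_).trans
      (Finset.sum_le_sum_of_subset_of_nonneg (Finset.erase_subset _ _)
        fun T _ _ => by positivity)
    have hTne : T.Nonempty := Finset.nonempty_iff_ne_empty.2 (Finset.mem_erase.1 hT).1
    have h1 := charsum hF (T.map ⟨b, hb⟩) (by simpa using hTne)
    simp only [Finset.prod_map, Finset.card_map, Function.Embedding.coeFn_mk] at h1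
    rw [Int.cast_mul, abs_mul]
    have h2 : |((∏ i ∈ T, e i : ℤ) : ℝ)| = 1 := by
      rw [← Int.cast_abs, Finset.abs_prod, Finset.prod_congr rfl fun i _ => he i,
        Finset.prod_const_one, Int.cast_one]
    rw [h2, one_mul]
    exact h1
  have hdiff' : |((2 ^ n * S.card - ∑ x, P x : ℤ) : ℝ)| ≤ n * 2 ^ n := by
    rw [← Int.cast_abs]; exact_mod_cast hdiff
  set K := ∑ T ∈ (Finset.univ : Finset (Fin n)).powerset, (21 * T.card + 60 : ℝ) with hK
  have hK0 : 0 ≤ K := Finset.sum_nonneg fun T _ => by positivity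
  clear_value K
  generalize (∑ x, P x) = R at hmain hdiff'
  have hs1 : 1 ≤ s := by
    rw [hs, Real.one_le_sqrt]; exact_mod_cast Fintype.card_pos
  have h2n : (1 : ℝ) ≤ 2 ^ n := one_le_pow₀ (by norm_num)
  have h2pos : (0 : ℝ) < 2 ^ n := by positivity
  have htot : |(2 : ℝ) ^ n * S.card - q| ≤ n * 2 ^ n + K * s := by
    have := abs_add_le ((2 ^ n * S.card - R : ℤ) : ℝ) ((R - q : ℤ) : ℝ)
    have e3 : ((2 ^ n * S.card - R : ℤ) : ℝ) + ((R - q : ℤ) : ℝ) =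
        (2 : ℝ) ^ n * S.card - q := by push_cast; ring
    rw [e3] at this
    linarith
  have e4 : (S.card : ℝ) - q / 2 ^ n = ((2 : ℝ) ^ n * S.card - q) / 2 ^ n := by
    field_simp
  rw [e4, abs_div, abs_of_pos h2pos, div_le_iff₀ h2pos]
  refine htot.trans ?_
  have h5 : (n : ℝ) * 2 ^ n ≤ n * 2 ^ n * s :=
    le_mul_of_one_le_right (by positivity) hs1
  have h6 : K * s ≤ K * s * 2 ^ n := le_mul_of_one_le_right (by positivity) h2n
  nlinarith
end
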